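/- There exists a constant C > 0 such that for every real x ≥ 1, the number of pairs (I, J) of nonzero ideals of ℤ[i] with N(I) ≤ x and N(J) ≤ x that are coprime (i.e. I ⊔ J = ⊤) differs from π²x²/(16·ζ_{ℚ(i)}(2)) by at most C·x^(4/3). -/

import Mathlib

open Real


/-- The absolute norm of an ideal of `ℤ[i]`: the cardinality of the quotient ring. -/
noncomputable def normI (I : Ideal GaussianInt) : ℕ := Nat.card (GaussianInt ⧸ I)

/-- `P x` : pairs of nonzero ideals of `ℤ[i]` with both norms at most `x`. -/
noncomputable def P (x : ℝ) : Set (Ideal GaussianInt × Ideal GaussianInt) :=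
  {p | p.1 ≠ ⊥ ∧ p.2 ≠ ⊥ ∧ (normI p.1 : ℝ) ≤ x ∧ (normI p.2 : ℝ) ≤ x}

/-- `ζ_{ℚ(i)}(2)`, the sum of `1/N(I)²` over nonzero ideals of `ℤ[i]`. -/
noncomputable def zetaQi2 : ℝ := ∑' I : {I : Ideal GaussianInt // I ≠ ⊥}, 1 / (normI I.1 : ℝ) ^ 2


noncomputable def eE (t : ℝ) : ℂ := Complex.exp (2 * π * t * Complex.I)

lemma norm_eE (t : ℝ) : ‖eE t‖ = 1 := by
  unfold eE
  have : (2 * π * t * Complex.I : ℂ) = ((2 * π * t : ℝ) : ℂ) * Complex.I := by push_cast; ring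
  rw [this, Complex.norm_exp_ofReal_mul_I]

lemma eE_add (s t : ℝ) : eE (s + t) = eE s * eE t := by
  unfold eE
  rw [← Complex.exp_add]; push_cast; ring_nf

lemma eE_int (k : ℤ) : eE k = 1 := by
  unfold eE
  have : (2 * π * ((k : ℝ) : ℂ) * Complex.I : ℂ) = k * (2 * π * Complex.I) := by push_cast; ring
  rw [this, Complex.exp_int_mul_two_pi_mul_I]

noncomputable def cotE (d : ℝ) : ℝ := cos (π * d) / sin (π * d)

noncomputable def gE (d : ℝ) : ℂ := 1 / 2 + Complex.I / 2 * (cotE d : ℂ)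

lemma gE_mul (d : ℝ) (h : sin (π * d) ≠ 0) : (1 - eE d) * gE d = 1 := by
  have e1 : eE d = ((cos (π * d) : ℝ) + (sin (π * d) : ℝ) * Complex.I) ^ 2 := by
    unfold eE
    rw [Complex.ofReal_cos, Complex.ofReal_sin, ← Complex.exp_mul_I, ← Complex.exp_nat_mul]
    push_cast; ring_nf
  have h2 := sin_sq_add_cos_sq (π * d)
  have h3 : ((sin (π * d) : ℝ) : ℂ) ^ 2 + ((cos (π * d) : ℝ) : ℂ) ^ 2 = 1 := by
    exact_mod_cast h2
  have h' : ((sin (π * d) : ℝ) : ℂ) ≠ 0 := by exact_mod_cast h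
  rw [e1]; unfold gE cotE
  push_cast at *
  set s := Complex.sin (π * d)
  set c := Complex.cos (π * d)
  have hI : Complex.I ^ 2 = -1 := Complex.I_sq
  field_simp
  have h4 : s ^ 2 = 1 - c ^ 2 := by linear_combination h3
  have hI3 : Complex.I ^ 3 = - Complex.I := by rw [pow_succ, hI]; ring
  ring_nf
  simp only [hI, hI3]
  have h5 : s ^ 3 = s * (1 - c ^ 2) := by rw [← h4]; ring
  rw [h5]
  ring_nf
  rw [h4]
  ring

lemma sin_lower (d δ : ℝ) (hδ : 0 < δ) (h1 : δ ≤ d) (h2 : d ≤ 1 - δ) : 2 * δ ≤ sin (π * d) := by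
  have hp := pi_pos
  rcases le_total d (1/2) with h | h
  · have := Real.mul_le_sin (x := π * d) (by nlinarith) (by nlinarith)
    have e : 2 / π * (π * d) = 2 * d := by field_simp
    linarith
  · have := Real.mul_le_sin (x := π - π * d) (by nlinarith) (by nlinarith)
    rw [sin_pi_sub] at this
    have e : 2 / π * (π - π * d) = 2 * (1 - d) := by field_simp
    linarith

lemma cotE_sub (a b : ℝ) (ha : sin (π * a) ≠ 0) (hb : sin (π * b) ≠ 0) :
    cotE a - cotE b = sin (π * (b - a)) / (sin (π * a) * sin (π * b)) := by
  unfold cotE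
  rw [mul_sub, sin_sub]; field_simp

lemma cotE_abs (d δ : ℝ) (hδ : 0 < δ) (h1 : δ ≤ d) (h2 : d ≤ 1 - δ) : |cotE d| ≤ 1 / (2 * δ) := by
  have := sin_lower d δ hδ h1 h2
  unfold cotE
  rw [abs_div, abs_of_pos (a := sin (π * d)) (by linarith)]
  gcongr
  exact abs_cos_le_one _

lemma norm_gE (d δ : ℝ) (hδ : 0 < δ) (h1 : δ ≤ d) (h2 : d ≤ 1 - δ) :
    ‖gE d‖ ≤ 1 / 2 + 1 / (4 * δ) := by
  unfold gE
  refine (norm_add_le _ _).trans ?_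
  have := cotE_abs d δ hδ h1 h2
  have e : 1 / (4 * δ) = 1 / 2 * (1 / (2 * δ)) := by field_simp; norm_num
  rw [norm_mul, Complex.norm_real, norm_div, norm_div, Complex.norm_I, e]
  simp only [norm_one, Complex.norm_ofNat, Real.norm_eq_abs]
  gcongr

lemma norm_gE_sub (a b δ : ℝ) (hδ : 0 < δ) (h1 : δ ≤ a) (h2 : a ≤ b) (h3 : b ≤ 1 - δ) :
    ‖gE a - gE b‖ = (cotE a - cotE b) / 2 := by
  have ha := sin_lower a δ hδ h1 (by linarith)
  have hb := sin_lower b δ hδ (by linarith) h3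
  have h : 0 ≤ cotE a - cotE b := by
    rw [cotE_sub a b (by linarith) (by linarith)]
    apply div_nonneg _ (by nlinarith)
    apply sin_nonneg_of_nonneg_of_le_pi
    · have := pi_pos; nlinarith
    · have := pi_pos; nlinarith
  have : gE a - gE b = Complex.I / 2 * ((cotE a - cotE b : ℝ) : ℂ) := by
    unfold gE; push_cast; ring
  rw [this, norm_mul, Complex.norm_real, Real.norm_eq_abs, abs_of_nonneg h]
  simp; ring

lemma KL_aux (φ : ℕ → ℝ) (δ : ℝ) (hδ : 0 < δ) (a : ℕ) (j : ℕ)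
    (hd : ∀ n, a ≤ n → n < a + 1 + j → δ ≤ φ (n + 1) - φ n ∧ φ (n + 1) - φ n ≤ 1 - δ)
    (hm : ∀ n, a ≤ n → n + 1 < a + 1 + j → φ (n + 2) - φ (n + 1) ≤ φ (n + 1) - φ n) :
    ‖∑ n ∈ Finset.Ico a (a + 1 + j), eE (φ n) + eE (φ (a + 1 + j)) * gE (φ (a + j + 1) - φ (a + j))‖
      ≤ ‖gE (φ (a + 1) - φ a)‖
        + (cotE (φ (a + j + 1) - φ (a + j)) - cotE (φ (a + 1) - φ a)) / 2 := by
  have key : ∀ n, δ ≤ φ (n + 1) - φ n → φ (n + 1) - φ n ≤ 1 - δ →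
      eE (φ n) = (eE (φ n) - eE (φ (n + 1))) * gE (φ (n + 1) - φ n) := by
    intro n h1 h2
    have h := gE_mul (φ (n + 1) - φ n) (by linarith [sin_lower _ δ hδ h1 h2])
    have e : eE (φ (n + 1)) = eE (φ n) * eE (φ (n + 1) - φ n) := by
      rw [← eE_add]; congr 1; ring
    rw [e]
    linear_combination -(eE (φ n)) * h
  induction j with
  | zero =>
    have := hd a le_rfl (by omega)
    simp only [add_zero, Nat.Ico_succ_singleton, Finset.sum_singleton, sub_self, zero_div]
    conv_lhs => rw [key a this.1 this.2]
    rw [show (eE (φ a) - eE (φ (a + 1))) * gE (φ (a + 1) - φ a) + eE (φ (a + 1)) * gE (φ (a + 1) - φ a)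
      = eE (φ a) * gE (φ (a + 1) - φ a) by ring, norm_mul, norm_eE, one_mul]
  | succ j ih =>
    have ih' := ih (fun n h1 h2 => hd n h1 (by omega)) (fun n h1 h2 => hm n h1 (by omega))
    have h1 := hd (a + j) (by omega) (by omega)
    have h2 := hd (a + j + 1) (by omega) (by omega)
    have h3 := hm (a + j) (by omega) (by omega)
    have e1 : a + 1 + (j + 1) = (a + 1 + j) + 1 := by ring
    have e2 : a + (j + 1) = a + j + 1 := by ring
    have e3 : a + 1 + j = a + j + 1 := by ring
    rw [e1, e2, Finset.sum_Ico_succ_top (by omega), e3]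
    rw [e3] at ih'
    have hs := norm_gE_sub (φ (a + j + 1 + 1) - φ (a + j + 1)) (φ (a + j + 1) - φ (a + j)) δ hδ
      h2.1 h3 h1.2
    have hk := key (a + j + 1) h2.1 h2.2
    set S := ∑ n ∈ Finset.Ico a (a + j + 1), eE (φ n)
    have : S + eE (φ (a + j + 1)) + eE (φ (a + j + 1 + 1)) * gE (φ (a + j + 1 + 1) - φ (a + j + 1))
      = (S + eE (φ (a + j + 1)) * gE (φ (a + j + 1) - φ (a + j))) + eE (φ (a + j + 1)) *
        (gE (φ (a + j + 1 + 1) - φ (a + j + 1)) - gE (φ (a + j + 1) - φ (a + j))) := by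
      linear_combination hk
    rw [this]
    refine (norm_add_le _ _).trans ?_
    rw [norm_mul, norm_eE, hs]
    linarith

lemma KL0 (φ : ℕ → ℝ) (δ : ℝ) (hδ : 0 < δ) (a b : ℕ)
    (hd : ∀ n, a ≤ n → n < b → δ ≤ φ (n + 1) - φ n ∧ φ (n + 1) - φ n ≤ 1 - δ)
    (hm : ∀ n, a ≤ n → n + 1 < b → φ (n + 2) - φ (n + 1) ≤ φ (n + 1) - φ n) :
    ‖∑ n ∈ Finset.Ico a b, eE (φ n)‖ ≤ 2 / δ := by
  rcases le_or_gt b a with h | h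
  · rw [Finset.Ico_eq_empty (by omega)]; simp; positivity
  obtain ⟨j, rfl⟩ : ∃ j, b = a + 1 + j := ⟨b - a - 1, by omega⟩
  have H := KL_aux φ δ hδ a j hd hm
  have h1 := hd a le_rfl (by omega)
  have h2 := hd (a + j) (by omega) (by omega)
  have g1 := norm_gE _ δ hδ h1.1 h1.2
  have g2 := norm_gE _ δ hδ h2.1 h2.2
  have c1 := abs_le.1 (cotE_abs _ δ hδ h1.1 h1.2)
  have c2 := abs_le.1 (cotE_abs _ δ hδ h2.1 h2.2)
  have hδ2 : δ ≤ 1 / 2 := by linarith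
  have t := norm_sub_le (∑ n ∈ Finset.Ico a (a + 1 + j), eE (φ n) + eE (φ (a + 1 + j)) * gE (φ (a + j + 1) - φ (a + j))) (eE (φ (a + 1 + j)) * gE (φ (a + j + 1) - φ (a + j)))
  rw [add_sub_cancel_right, norm_mul, norm_eE, one_mul] at t
  have hb : 1 ≤ 1 / (2 * δ) := by rw [le_div_iff₀ (by positivity)]; linarith
  have e1 : 1 / (4 * δ) = (1 / (2 * δ)) / 2 := by field_simp; norm_num
  have e2 : 2 / δ = 4 * (1 / (2 * δ)) := by field_simp; norm_num
  rw [e1] at g1 g2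
  rw [e2]
  linarith

lemma KL (φ : ℕ → ℝ) (δ : ℝ) (hδ : 0 < δ) (a b : ℕ) (k : ℤ)
    (hd : ∀ n, a ≤ n → n < b → k + δ ≤ φ (n + 1) - φ n ∧ φ (n + 1) - φ n ≤ k + 1 - δ)
    (hm : ∀ n, a ≤ n → n + 1 < b → φ (n + 2) - φ (n + 1) ≤ φ (n + 1) - φ n) :
    ‖∑ n ∈ Finset.Ico a b, eE (φ n)‖ ≤ 2 / δ := by
  have := KL0 (fun n => φ n + ((-k * n : ℤ) : ℝ)) δ hδ a b
    (fun n h1 h2 => by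
      have := hd n h1 h2
      push_cast; constructor <;> linarith)
    (fun n h1 h2 => by
      have := hm n h1 h2
      push_cast; linarith)
  simpa only [eE_add, eE_int, mul_one] using this

lemma count_spaced (d : ℕ → ℝ) (M : ℕ) (l : ℝ) (hl : 0 < l)
    (hd : ∀ n, n + 1 < M → l ≤ d n - d (n + 1)) (s : Finset ℕ) (u δ : ℝ) (hδ : 0 ≤ δ)
    (hs : ∀ n ∈ s, n < M ∧ u ≤ d n ∧ d n ≤ u + δ) : (s.card : ℝ) ≤ δ / l + 1 := by
  have H : ∀ j n, n + j < M → l * j ≤ d n - d (n + j) := by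
    intro j
    induction j with
    | zero => intro n _; simp
    | succ j ih =>
      intro n h
      have h1 := ih n (by omega)
      have h2 := hd (n + j) (by omega)
      rw [← add_assoc]; push_cast; linarith
  rcases s.eq_empty_or_nonempty with rfl | hne
  · simp; positivity
  have h1 := hs _ (s.min'_mem hne)
  have h2 := hs _ (s.max'_mem hne)
  have hle := s.min'_le _ (s.max'_mem hne)
  have h3 := H (s.max' hne - s.min' hne) (s.min' hne) (by omega)
  rw [Nat.add_sub_cancel' hle] at h3
  have h4 : ((s.max' hne - s.min' hne : ℕ) : ℝ) ≤ δ / l := by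
    rw [le_div_iff₀ hl]; linarith
  have h5 : s ⊆ Finset.Icc (s.min' hne) (s.max' hne) := by
    intro n hn
    exact Finset.mem_Icc.2 ⟨s.min'_le _ hn, s.le_max' _ hn⟩
  have h6 := Finset.card_le_card h5
  rw [Nat.card_Icc] at h6
  have h7 : s.card ≤ (s.max' hne - s.min' hne) + 1 := by omega
  have h8 : (s.card : ℝ) ≤ ((s.max' hne - s.min' hne : ℕ) : ℝ) + 1 := by exact_mod_cast h7
  linarith

lemma norm_sum_eE_le (s : Finset ℕ) (φ : ℕ → ℝ) : ‖∑ n ∈ s, eE (φ n)‖ ≤ s.card := by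
  refine (norm_sum_le _ _).trans ?_
  simp [norm_eE]

lemma anti_spaced (d : ℕ → ℝ) (M : ℕ) (l : ℝ) (hl : 0 < l)
    (hd : ∀ n, n + 1 < M → l ≤ d n - d (n + 1)) : ∀ m n, m ≤ n → n < M → d n ≤ d m := by
  intro m n hmn
  induction n, hmn using Nat.le_induction with
  | base => intro _; exact le_rfl
  | succ n hn ih =>
    intro h
    have := hd n h
    linarith [ih (by omega)]

lemma fiber_bound (φ : ℕ → ℝ) (M : ℕ) (l : ℝ) (hl : 0 < l)
    (hd : ∀ n, n + 1 < M → l ≤ (φ (n + 1) - φ n) - (φ (n + 2) - φ (n + 1)))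
    (k : ℤ) (δ : ℝ) (hδ : 0 < δ) :
    ‖∑ n ∈ (Finset.range M).filter (fun n => ⌊φ (n + 1) - φ n⌋ = k), eE (φ n)‖
      ≤ 2 / δ + 2 * (δ / l + 1) := by
  set d : ℕ → ℝ := fun n => φ (n + 1) - φ n with hdd
  have hd' : ∀ n, n + 1 < M → l ≤ d n - d (n + 1) := hd
  set F := (Finset.range M).filter (fun n => ⌊φ (n + 1) - φ n⌋ = k) with hF
  have hFm : ∀ n ∈ F, n < M ∧ (k : ℝ) ≤ d n ∧ d n < k + 1 := by
    intro n hn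
    rw [hF, Finset.mem_filter, Finset.mem_range, Int.floor_eq_iff] at hn
    exact ⟨hn.1, hn.2⟩
  rw [← Finset.sum_filter_add_sum_filter_not F (fun n => d n < k + δ),
    ← Finset.sum_filter_add_sum_filter_not (F.filter (fun n => ¬ d n < k + δ)) (fun n => k + 1 - δ < d n)]
  have A : ‖∑ n ∈ F.filter (fun n => d n < k + δ), eE (φ n)‖ ≤ δ / l + 1 := by
    refine (norm_sum_eE_le _ _).trans (count_spaced d M l hl hd' _ k δ hδ.le ?_)
    intro n hn
    rw [Finset.mem_filter] at hn
    have := hFm n hn.1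
    exact ⟨this.1, this.2.1, hn.2.le⟩
  have B : ‖∑ n ∈ (F.filter (fun n => ¬ d n < k + δ)).filter (fun n => k + 1 - δ < d n), eE (φ n)‖ ≤ δ / l + 1 := by
    refine (norm_sum_eE_le _ _).trans (count_spaced d M l hl hd' _ (k + 1 - δ) δ hδ.le ?_)
    intro n hn
    rw [Finset.mem_filter, Finset.mem_filter] at hn
    have := hFm n hn.1.1
    exact ⟨this.1, hn.2.le, by linarith⟩
  have C : ‖∑ n ∈ (F.filter (fun n => ¬ d n < k + δ)).filter (fun n => ¬ k + 1 - δ < d n), eE (φ n)‖ ≤ 2 / δ := by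
    set s := (F.filter (fun n => ¬ d n < k + δ)).filter (fun n => ¬ k + 1 - δ < d n) with hs
    have hsm : ∀ n, n ∈ s ↔ n < M ∧ (k : ℝ) + δ ≤ d n ∧ d n ≤ k + 1 - δ := by
      intro n
      rw [hs, Finset.mem_filter, Finset.mem_filter, not_lt, not_lt, hF, Finset.mem_filter,
        Finset.mem_range, Int.floor_eq_iff]
      constructor
      · rintro ⟨⟨⟨h1, h2⟩, h3⟩, h4⟩; exact ⟨h1, h3, h4⟩
      · rintro ⟨h1, h2, h3⟩
        have e : d n = φ (n + 1) - φ n := rfl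
        exact ⟨⟨⟨h1, by linarith, by linarith⟩, h2⟩, h3⟩
    rcases s.eq_empty_or_nonempty with he | hne
    · rw [he]; simp; positivity
    have h1 := (hsm _).1 (s.min'_mem hne)
    have h2 := (hsm _).1 (s.max'_mem hne)
    have hle := s.min'_le _ (s.max'_mem hne)
    have anti := anti_spaced d M l hl hd'
    have hI : s = Finset.Ico (s.min' hne) (s.max' hne + 1) := by
      ext n
      rw [Finset.mem_Ico]
      constructor
      · intro hn; exact ⟨s.min'_le _ hn, Nat.lt_succ_of_le (s.le_max' _ hn)⟩
      · rintro ⟨h3, h4⟩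
        rw [hsm]
        refine ⟨by omega, h2.2.1.trans (anti _ _ (by omega) h2.1), (anti _ _ h3 (by omega)).trans h1.2.2⟩
    rw [hI]
    apply KL φ δ hδ _ _ k
    · intro n h3 h4
      have : n ∈ s := by rw [hI, Finset.mem_Ico]; exact ⟨h3, h4⟩
      exact ((hsm n).1 this).2
    · intro n h3 h4
      have := hd n (by omega)
      linarith
  refine (norm_add_le _ _).trans ?_
  have := norm_add_le (∑ n ∈ (F.filter (fun n => ¬ d n < k + δ)).filter (fun n => k + 1 - δ < d n), eE (φ n)) (∑ n ∈ (F.filter (fun n => ¬ d n < k + δ)).filter (fun n => ¬ k + 1 - δ < d n), eE (φ n))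
  linarith

lemma SDT (φ : ℕ → ℝ) (M : ℕ) (l : ℝ) (hl : 0 < l) (hl1 : l ≤ 1) (h : ℕ)
    (hd : ∀ n, n + 1 < M → l ≤ (φ (n + 1) - φ n) - (φ (n + 2) - φ (n + 1)))
    (hr : ∀ n, n < M → -(h : ℝ) ≤ φ (n + 1) - φ n ∧ φ (n + 1) - φ n ≤ 0) :
    ‖∑ n ∈ Finset.range M, eE (φ n)‖ ≤ (h + 1) * (6 / √l) := by
  have hmap : ∀ n ∈ Finset.range M, ⌊φ (n + 1) - φ n⌋ ∈ Finset.Icc (-(h : ℤ)) 0 := by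
    intro n hn
    have := hr n (Finset.mem_range.1 hn)
    rw [Finset.mem_Icc]
    constructor
    · rw [Int.le_floor]; push_cast; exact this.1
    · have := Int.floor_le_floor this.2
      simpa using this
  rw [← Finset.sum_fiberwise_of_maps_to hmap]
  refine (norm_sum_le _ _).trans ?_
  have hs : 0 < √l := sqrt_pos.2 hl
  have hs1 : √l ≤ 1 := by rw [Real.sqrt_le_one]; exact hl1
  refine (Finset.sum_le_sum (fun k _ => fiber_bound φ M l hl hd k (√l) hs)).trans ?_
  rw [Finset.sum_const, Int.card_Icc, nsmul_eq_mul]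
  have e : ((0 + 1 - -(h : ℤ)).toNat : ℝ) = h + 1 := by
    have : (0 + 1 - -(h : ℤ)).toNat = h + 1 := by omega
    rw [this]; push_cast; ring
  rw [e]
  gcongr
  have e1 : √l / l = 1 / √l := by
    rw [div_eq_div_iff hl.ne' hs.ne', mul_self_sqrt hl.le]; ring
  have e2 : 1 ≤ 1 / √l := by rw [le_div_iff₀ hs]; linarith
  rw [e1]
  have e3 : 2 / √l = 2 * (1 / √l) := by ring
  have e4 : 6 / √l = 6 * (1 / √l) := by ring
  rw [e3, e4]; linarith


lemma circ_facts (x : ℝ) (M : ℕ) (hx : 1 ≤ x) (hM : 2 * (M : ℝ) ^ 2 ≤ x) (n : ℕ) (hn : n < M) :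
    √(x - (n + 1 : ℕ) ^ 2) - √(x - (n : ℕ) ^ 2)
      = - (2 * n + 1) / (√(x - (n : ℕ) ^ 2) + √(x - (n + 1 : ℕ) ^ 2))
    ∧ (n + 1 : ℝ) ≤ √(x - (n + 1 : ℕ) ^ 2) ∧ √(x - (n + 1 : ℕ) ^ 2) ≤ √(x - (n : ℕ) ^ 2)
    ∧ √(x - (n : ℕ) ^ 2) ≤ √x := by
  have h1 : (n + 1 : ℝ) ≤ M := by exact_mod_cast hn
  have h0 : (0 : ℝ) ≤ n := by positivity
  have h2 : (n + 1 : ℝ) ^ 2 ≤ (M : ℝ) ^ 2 := by gcongr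
  have a2 : (n + 1 : ℝ) ≤ √(x - (n + 1 : ℕ) ^ 2) := by
    apply le_sqrt_of_sq_le; push_cast; linarith
  have a3 : √(x - (n + 1 : ℕ) ^ 2) ≤ √(x - (n : ℕ) ^ 2) := by
    apply sqrt_le_sqrt; push_cast; nlinarith
  have a4 : √(x - (n : ℕ) ^ 2) ≤ √x := by
    apply sqrt_le_sqrt; nlinarith
  refine ⟨?_, a2, a3, a4⟩
  rw [eq_div_iff (by linarith)]
  have s1 : √(x - (n + 1 : ℕ) ^ 2) ^ 2 = x - (n + 1 : ℕ) ^ 2 := sq_sqrt (by push_cast; nlinarith)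
  have s2 : √(x - (n : ℕ) ^ 2) ^ 2 = x - (n : ℕ) ^ 2 := sq_sqrt (by nlinarith)
  push_cast at *
  nlinarith

lemma circ_exp0 (x : ℝ) (M : ℕ) (hx : 1 ≤ x) (hM : 2 * (M : ℝ) ^ 2 ≤ x) (h : ℕ) (hh : 1 ≤ h) :
    ‖∑ n ∈ Finset.range M, eE (h * √(x - (n : ℕ) ^ 2))‖ ≤ 12 * √(h * √x) := by
  have hh' : (1 : ℝ) ≤ h := by exact_mod_cast hh
  have hR : 1 ≤ √x := by rw [one_le_sqrt]; exact hx
  have hMR : (M : ℝ) ≤ √x := by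
    apply le_sqrt_of_sq_le; nlinarith
  rcases le_total (√x) h with hc | hc
  · refine (norm_sum_eE_le _ (fun n => h * √(x - (n : ℕ) ^ 2))).trans ?_
    rw [Finset.card_range]
    have : √x ≤ √(h * √x) := by
      apply le_sqrt_of_sq_le; nlinarith
    linarith [sqrt_nonneg (h * √x)]
  · have := SDT (fun n => h * √(x - (n : ℕ) ^ 2)) M (h / √x) (by positivity)
      (by rw [div_le_one (by positivity)]; exact hc) h ?_ ?_
    · refine this.trans ?_
      rw [sqrt_div (by positivity), sqrt_mul (by positivity)]
      have e : (h : ℝ) = √h * √h := (mul_self_sqrt (by positivity)).symm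
      have p1 : 0 < √(h : ℝ) := by positivity
      have p2 : 0 < √√x := by positivity
      have : ((h : ℝ) + 1) * (6 / (√h / √√x)) ≤ (2 * h) * (6 / (√h / √√x)) := by
        gcongr; linarith
      refine this.trans (le_of_eq ?_)
      field_simp
      nlinarith
    · intro n hn
      obtain ⟨a1, a2, a3, a4⟩ := circ_facts x M hx hM n (by omega)
      obtain ⟨b1, b2, b3, b4⟩ := circ_facts x M hx hM (n + 1) hn
      rw [← mul_sub, ← mul_sub, ← mul_sub, a1]
      rw [show n + 1 + 1 = n + 2 by ring] at *
      rw [b1, div_eq_mul_one_div]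
      gcongr
      set A := √(x - (n : ℕ) ^ 2)
      set B := √(x - (n + 1 : ℕ) ^ 2)
      set C := √(x - (n + 2 : ℕ) ^ 2)
      have n0 : (0 : ℝ) ≤ n := by positivity
      push_cast at *
      have k1 : (2 * (n : ℝ) + 3) / (A + B) ≤ (2 * (n + 1) + 1) / (B + C) := by
        apply div_le_div₀ <;> linarith
      have k2 : 1 / √x ≤ 2 / (A + B) := by
        rw [div_le_div_iff₀ (by linarith) (by linarith)]; linarith
      have k3 : -(2 * (n : ℝ) + 1) / (A + B) = 2 / (A + B) - (2 * (n : ℝ) + 3) / (A + B) := by ring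
      have k4 : -(2 * ((n : ℝ) + 1) + 1) / (B + C) = -((2 * ((n : ℝ) + 1) + 1) / (B + C)) := by ring
      rw [k3, k4]
      linarith
    · intro n hn
      obtain ⟨a1, a2, a3, a4⟩ := circ_facts x M hx hM n (by omega)
      rw [← mul_sub, a1]
      set A := √(x - (n : ℕ) ^ 2)
      set B := √(x - (n + 1 : ℕ) ^ 2)
      have n0 : (0 : ℝ) ≤ n := by positivity
      have k1 : (2 * (n : ℝ) + 1) / (A + B) ≤ 1 := by
        rw [div_le_one (by linarith)]; linarith
      have k2 : 0 ≤ (2 * (n : ℝ) + 1) / (A + B) := by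
        apply div_nonneg <;> linarith
      rw [neg_div]
      constructor <;> nlinarith

lemma circ_exp (x : ℝ) (M : ℕ) (hx : 1 ≤ x) (hM : 2 * (M : ℝ) ^ 2 ≤ x) (h : ℕ) (hh : 1 ≤ h) :
    ‖∑ n ∈ Finset.Ico 1 (M + 1), eE (h * √(x - (n : ℕ) ^ 2))‖ ≤ 14 * √(h * √x) := by
  have h0 := circ_exp0 x M hx hM h hh
  have e1 : ∑ n ∈ Finset.Ico 1 (M + 1), eE (h * √(x - (n : ℕ) ^ 2))
     = ∑ n ∈ Finset.range M, eE (h * √(x - (n : ℕ) ^ 2)) + eE (h * √(x - (M : ℕ) ^ 2))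
       - eE (h * √(x - (0 : ℕ) ^ 2)) := by
    rw [← Finset.sum_range_succ, Finset.range_eq_Ico,
      Finset.sum_eq_sum_Ico_succ_bot (a := 0) (b := M + 1) (by omega)]
    rw [zero_add, add_sub_cancel_left]
  rw [e1]
  refine (norm_sub_le _ _).trans ?_
  rw [norm_eE]
  have t := norm_add_le (∑ n ∈ Finset.range M, eE (h * √(x - (n : ℕ) ^ 2))) (eE (h * √(x - (M : ℕ) ^ 2)))
  rw [norm_eE] at t
  have : 1 ≤ √(h * √x) := by
    rw [one_le_sqrt]
    have hh' : (1 : ℝ) ≤ h := by exact_mod_cast hh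
    have hR : 1 ≤ √x := by rw [one_le_sqrt]; exact hx
    nlinarith
  linarith

noncomputable def psiE (t : ℝ) : ℝ := Int.fract t - 1 / 2
noncomputable def BE (t : ℝ) : ℝ := Int.fract t ^ 2 - Int.fract t + 6⁻¹

lemma BE_hasSum (t : ℝ) : HasSum (fun n : ℕ => 1 / (n : ℝ) ^ 2 * cos (2 * π * n * t)) (π ^ 2 * BE t) := by
  have := hasSum_one_div_nat_pow_mul_cos (k := 1) one_ne_zero (x := Int.fract t)
    ⟨Int.fract_nonneg t, (Int.fract_lt_one t).le⟩
  have e := bernoulliFun_two (Int.fract t)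
  rw [bernoulliFun] at e
  simp only [mul_one] at this
  rw [e] at this
  convert this using 1
  · ext n
    congr 1
    rw [show 2 * π * n * t = 2 * π * n * Int.fract t + ((n * ⌊t⌋ : ℤ) : ℝ) * (2 * π) by
      conv_lhs => rw [← Int.fract_add_floor t]
      push_cast; ring, cos_add_int_mul_two_pi]
  · have h2 : ((Nat.factorial 2 : ℕ) : ℝ) = 2 := by norm_num [Nat.factorial]
    rw [h2]; unfold BE; ring

lemma fract_add_cases (t δ : ℝ) (h0 : 0 < δ) (h1 : δ ≤ 1) :
    (Int.fract (t + δ) = Int.fract t + δ) ∨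
    (Int.fract (t + δ) = Int.fract t + δ - 1 ∧ 1 ≤ Int.fract t + δ) := by
  have a := Int.fract_nonneg t
  have b := Int.fract_lt_one t
  have c := Int.fract_add_floor t
  rcases lt_or_ge (Int.fract t + δ) 1 with h | h
  · left; rw [Int.fract_eq_iff]
    exact ⟨by linarith, h, ⌊t⌋, by linarith⟩
  · right
    refine ⟨?_, h⟩
    rw [Int.fract_eq_iff]
    exact ⟨by linarith, by linarith, ⌊t⌋ + 1, by push_cast; linarith⟩

lemma psi_lower (t δ : ℝ) (h0 : 0 < δ) (h1 : δ ≤ 1) :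
    (BE (t + δ) - BE t) / (2 * δ) - δ / 2 ≤ psiE t := by
  unfold BE psiE
  rw [sub_le_iff_le_add, div_le_iff₀ (by positivity)]
  rcases fract_add_cases t δ h0 h1 with h | ⟨h, h'⟩ <;> rw [h] <;> nlinarith

lemma psi_upper (t δ : ℝ) (h0 : 0 < δ) (h1 : δ ≤ 1) :
    psiE t ≤ -(BE (t + -δ) - BE t) / (2 * δ) + δ / 2 := by
  unfold BE psiE
  rw [← sub_le_iff_le_add, le_div_iff₀ (by positivity)]
  have c := fract_add_cases (t + -δ) δ h0 h1
  rw [neg_add_cancel_right] at c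
  have b := Int.fract_lt_one (t + -δ)
  rcases c with h | ⟨h, h'⟩ <;> rw [h] <;> nlinarith

lemma u_sum (δ : ℝ) (h0 : 0 < δ) (N : ℕ) :
    ∑ n ∈ Finset.range (N + 1), min 1 (n * δ) * √n / (n : ℝ) ^ 2
      ≤ 8 * √δ * (√(N * δ) / (1 + √(N * δ))) := by
  induction N with
  | zero => simp
  | succ N ih =>
    rw [Finset.sum_range_succ]
    refine (add_le_add_left ih _).trans ?_
    set z := √((N + 1 : ℕ) * δ) with hz
    set w := √((N : ℕ) * δ) with hw
    have z2 : z ^ 2 = (N + 1) * δ := by rw [hz, sq_sqrt (by positivity)]; push_cast; ring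
    have w2 : w ^ 2 = N * δ := by rw [hw, sq_sqrt (by positivity)]
    have zp : 0 < z := by positivity
    have wp : 0 ≤ w := by positivity
    have hwz : w ≤ z := by apply sqrt_le_sqrt; push_cast; nlinarith
    have dp : 0 < √δ := sqrt_pos.2 h0
    have ds : √δ ^ 2 = δ := sq_sqrt h0.le
    have zs : √((N + 1 : ℕ) : ℝ) = z / √δ := by rw [hz, ← sqrt_div' _ h0.le]; congr 1; field_simp
    have zn : (((N + 1 : ℕ) : ℝ)) = z ^ 2 / δ := by rw [z2]; field_simp; push_cast; ring
    rw [zs, zn]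
    rw [show z ^ 2 / δ * δ = z ^ 2 by field_simp]
    have m : min 1 (z ^ 2) ≤ 4 * z ^ 2 / (1 + z) ^ 2 := by
      rw [le_div_iff₀ (by positivity)]
      rcases le_total z 1 with h | h
      · have := min_le_right 1 (z ^ 2)
        have : (1 + z) ^ 2 ≤ 4 := by nlinarith
        nlinarith [sq_nonneg z, sq_nonneg (1 + z)]
      · have := min_le_left 1 (z ^ 2)
        have : (1 + z) ^ 2 ≤ 4 * z ^ 2 := by nlinarith
        nlinarith [sq_nonneg (1 + z)]
    have k1 : min 1 (z ^ 2) * (z / √δ) / (z ^ 2 / δ) ^ 2 ≤ 4 * z ^ 2 / (1 + z) ^ 2 * (z / √δ) / (z ^ 2 / δ) ^ 2 := by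
      gcongr
    have k2 : 4 * z ^ 2 / (1 + z) ^ 2 * (z / √δ) / (z ^ 2 / δ) ^ 2 = 8 * √δ * (δ / (2 * z) / (1 + z) ^ 2) := by
      have : δ ^ 2 = √δ ^ 2 * δ := by rw [ds]; ring
      rw [div_pow, this]; field_simp; norm_num
    have k3 : δ / (2 * z) ≤ z - w := by
      rw [div_le_iff₀ (by positivity)]; nlinarith
    have k4 : δ / (2 * z) / (1 + z) ^ 2 ≤ z / (1 + z) - w / (1 + w) := by
      have : z / (1 + z) - w / (1 + w) = (z - w) / ((1 + z) * (1 + w)) := by field_simp; ring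
      rw [this]
      apply div_le_div₀ (by linarith) k3 (by positivity)
      nlinarith
    have k5 : 8 * √δ * (δ / (2 * z) / (1 + z) ^ 2) ≤ 8 * √δ * (z / (1 + z) - w / (1 + w)) := by gcongr
    linarith

lemma u_sum' (δ : ℝ) (h0 : 0 < δ) (N : ℕ) :
    ∑ n ∈ Finset.range N, min 1 (n * δ) * √n / (n : ℝ) ^ 2 ≤ 8 * √δ := by
  have h1 : ∑ n ∈ Finset.range N, min 1 (n * δ) * √n / (n : ℝ) ^ 2 ≤ ∑ n ∈ Finset.range (N + 1), min 1 (n * δ) * √n / (n : ℝ) ^ 2 := by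
    rw [Finset.sum_range_succ]
    have : 0 ≤ min 1 (N * δ) * √N / (N : ℝ) ^ 2 := by positivity
    linarith
  refine h1.trans ((u_sum δ h0 N).trans ?_)
  have : √(N * δ) / (1 + √(N * δ)) ≤ 1 := by
    rw [div_le_one (by positivity)]; linarith
  have hd := sqrt_nonneg δ
  nlinarith

lemma eE_sub_one (n : ℕ) (s δ : ℝ) (hs : |s| = δ) : ‖eE (n * s) - 1‖ ≤ 2 * π * min 1 (n * δ) := by
  have h1 : ‖eE (n * s) - 1‖ ≤ 2 := by
    refine (norm_sub_le _ _).trans ?_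
    rw [norm_eE]; norm_num
  have h2 : ‖eE (n * s) - 1‖ ≤ 2 * π * (n * δ) := by
    have := Real.norm_exp_I_mul_ofReal_sub_one_le (x := 2 * π * (n * s))
    have e : eE (n * s) = Complex.exp (Complex.I * ((2 * π * (n * s) : ℝ) : ℂ)) := by
      unfold eE; congr 1; push_cast; ring
    rw [e]
    refine this.trans (le_of_eq ?_)
    rw [Real.norm_eq_abs, abs_mul, abs_mul, abs_mul, hs]
    simp [abs_of_pos pi_pos]
  have hp := pi_gt_three
  rcases le_total 1 ((n : ℝ) * δ) with h | h
  · rw [min_eq_left h]; linarith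
  · rw [min_eq_right h]; exact h2

lemma B_sum (T : Finset ℕ) (t : ℕ → ℝ) (R : ℝ) (hR : 0 ≤ R) (s δ : ℝ) (h0 : 0 < δ) (hs : |s| = δ)
    (hS : ∀ h : ℕ, 1 ≤ h → ‖∑ a ∈ T, eE (h * t a)‖ ≤ 14 * √(h * R)) :
    |∑ a ∈ T, (BE (t a + s) - BE (t a))| ≤ 75 * √(R * δ) := by
  have H : HasSum (fun n : ℕ => ∑ a ∈ T, (1 / (n : ℝ) ^ 2 * cos (2 * π * n * (t a + s))
      - 1 / (n : ℝ) ^ 2 * cos (2 * π * n * (t a)))) (∑ a ∈ T, (π ^ 2 * BE (t a + s) - π ^ 2 * BE (t a))) :=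
    hasSum_sum fun a _ => (BE_hasSum _).sub (BE_hasSum _)
  have key : |∑ a ∈ T, (π ^ 2 * BE (t a + s) - π ^ 2 * BE (t a))| ≤ 28 * π * √R * (8 * √δ) := by
    refine le_of_tendsto (H.tendsto_sum_nat.abs) (Filter.Eventually.of_forall fun N => ?_)
    refine (Finset.abs_sum_le_sum_abs _ _).trans ?_
    refine le_trans ?_ (mul_le_mul_of_nonneg_left (u_sum' δ h0 N) (by positivity))
    rw [Finset.mul_sum]
    apply Finset.sum_le_sum
    intro n _
    rcases Nat.eq_zero_or_pos n with rfl | hn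
    · simp
    have e : ∑ a ∈ T, (1 / (n : ℝ) ^ 2 * cos (2 * π * n * (t a + s))
      - 1 / (n : ℝ) ^ 2 * cos (2 * π * n * (t a))) =
       1 / (n : ℝ) ^ 2 * ((eE (n * s) - 1) * ∑ a ∈ T, eE (n * t a)).re := by
      rw [Finset.mul_sum, Complex.re_sum, Finset.mul_sum]
      apply Finset.sum_congr rfl
      intro a _
      rw [← mul_sub]
      congr 1
      rw [sub_mul, one_mul, ← eE_add, Complex.sub_re]
      have r : ∀ y : ℝ, (eE y).re = cos (2 * π * y) := by
        intro y
        unfold eE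
        rw [show (2 * π * y * Complex.I : ℂ) = ((2 * π * y : ℝ) : ℂ) * Complex.I by push_cast; ring,
          Complex.exp_ofReal_mul_I_re]
      rw [r, r]; ring_nf
    rw [e, abs_mul, abs_of_nonneg (by positivity : 0 ≤ 1 / (n : ℝ) ^ 2)]
    have h1 := Complex.abs_re_le_norm ((eE (n * s) - 1) * ∑ a ∈ T, eE (n * t a))
    rw [norm_mul] at h1
    have h2 := eE_sub_one n s δ hs
    have h3 := hS n hn
    have h4 : ‖eE (n * s) - 1‖ * ‖∑ a ∈ T, eE (n * t a)‖ ≤ 2 * π * min 1 (n * δ) * (14 * √(n * R)) := by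
      gcongr
    calc _ ≤ 1 / (n : ℝ) ^ 2 * (2 * π * min 1 (n * δ) * (14 * √(n * R))) := by
          gcongr; exact h1.trans h4
      _ = _ := by rw [sqrt_mul (by positivity)]; ring
  have e : ∑ a ∈ T, (π ^ 2 * BE (t a + s) - π ^ 2 * BE (t a)) = π ^ 2 * ∑ a ∈ T, (BE (t a + s) - BE (t a)) := by
    rw [Finset.mul_sum]; simp only [mul_sub]
  rw [e, abs_mul, abs_of_pos (by positivity : 0 < π ^ 2)] at key
  rw [sqrt_mul hR]
  have hp := pi_gt_three
  have q : 0 ≤ √R * √δ := by positivity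
  have k2 : π * |∑ a ∈ T, (BE (t a + s) - BE (t a))| ≤ 224 * (√R * √δ) := by
    have : π * (π * |∑ a ∈ T, (BE (t a + s) - BE (t a))|) ≤ π * (224 * (√R * √δ)) := by linarith
    exact le_of_mul_le_mul_left this pi_pos
  have := abs_nonneg (∑ a ∈ T, (BE (t a + s) - BE (t a)))
  nlinarith

lemma psi_sum_gen (T : Finset ℕ) (t : ℕ → ℝ) (R : ℝ) (hR : 0 ≤ R) (hT : (T.card : ℝ) ≤ R)
    (δ : ℝ) (h0 : 0 < δ) (h1 : δ ≤ 1)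
    (hS : ∀ h : ℕ, 1 ≤ h → ‖∑ a ∈ T, eE (h * t a)‖ ≤ 14 * √(h * R)) :
    |∑ a ∈ T, psiE (t a)| ≤ R * δ / 2 + 75 * √(R * δ) / (2 * δ) := by
  have A := abs_le.1 (B_sum T t R hR δ δ h0 (abs_of_pos h0) hS)
  have B := abs_le.1 (B_sum T t R hR (-δ) δ h0 (by rw [abs_neg, abs_of_pos h0]) hS)
  have L := Finset.sum_le_sum (fun a (_ : a ∈ T) => psi_lower (t a) δ h0 h1)
  have U := Finset.sum_le_sum (fun a (_ : a ∈ T) => psi_upper (t a) δ h0 h1)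
  rw [Finset.sum_sub_distrib, ← Finset.sum_div, Finset.sum_const, nsmul_eq_mul] at L
  rw [Finset.sum_add_distrib, ← Finset.sum_div, Finset.sum_neg_distrib, Finset.sum_const, nsmul_eq_mul] at U
  have c : (T.card : ℝ) * (δ / 2) ≤ R * δ / 2 := by nlinarith
  have A1 : -(75 * √(R * δ)) / (2 * δ) ≤ (∑ a ∈ T, (BE (t a + δ) - BE (t a))) / (2 * δ) := by
    gcongr; exact A.1
  have B1 : -(∑ a ∈ T, (BE (t a + -δ) - BE (t a))) / (2 * δ) ≤ 75 * √(R * δ) / (2 * δ) := by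
    gcongr; linarith [B.1]
  rw [neg_div] at A1
  rw [abs_le]
  constructor <;> linarith

lemma psi_sum (x : ℝ) (M : ℕ) (hx : 1 ≤ x) (hM : 2 * (M : ℝ) ^ 2 ≤ x) :
    |∑ n ∈ Finset.Ico 1 (M + 1), psiE (√(x - (n : ℕ) ^ 2))| ≤ 38 * x ^ ((1 : ℝ) / 3) := by
  have x0 : 0 < x := by linarith
  have := psi_sum_gen (Finset.Ico 1 (M + 1)) (fun n => √(x - (n : ℕ) ^ 2)) (√x) (sqrt_nonneg _)
    (by simp; apply le_sqrt_of_sq_le; nlinarith) (x ^ (-(1 : ℝ) / 6)) (by positivity)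
    (rpow_le_one_of_one_le_of_nonpos hx (by norm_num)) (fun h hh => circ_exp x M hx hM h hh)
  refine this.trans (le_of_eq ?_)
  have e1 : √x * x ^ (-(1 : ℝ) / 6) = x ^ ((1 : ℝ) / 3) := by
    rw [sqrt_eq_rpow, ← rpow_add x0]; norm_num
  have e2 : √(x ^ ((1 : ℝ) / 3)) = x ^ ((1 : ℝ) / 3) * x ^ (-(1 : ℝ) / 6) := by
    rw [sqrt_eq_rpow, ← rpow_mul x0.le, ← rpow_add x0]; norm_num
  rw [e1, e2]
  have : x ^ (-(1 : ℝ) / 6) ≠ 0 := by positivity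
  field_simp; norm_num


noncomputable def FE (x t : ℝ) : ℝ := (t * √(x - t ^ 2) + x * arcsin (t / √x)) / 2

lemma FE_deriv (x t : ℝ) (hx : 0 < x) (h0 : 0 ≤ t) (ht : t ^ 2 < x) :
    HasDerivAt (FE x) (√(x - t ^ 2)) t := by
  have hR : 0 < √x := sqrt_pos.2 hx
  have hlt : t / √x < 1 := by rw [div_lt_one hR]; exact lt_sqrt_of_sq_lt ht
  have h1 : HasDerivAt (fun t => √(x - t ^ 2)) (-(2 * t) / (2 * √(x - t ^ 2))) t := by
    apply HasDerivAt.sqrt _ (by linarith)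
    have := (hasDerivAt_pow 2 t).const_sub x
    simpa using this
  have h2 : HasDerivAt (fun t => arcsin (t / √x)) (1 / √(1 - (t / √x) ^ 2) * (1 / √x)) t := by
    have := (hasDerivAt_id t).div_const (√x)
    exact (Real.hasDerivAt_arcsin (by have : 0 ≤ t / √x := by positivity
                                      linarith) hlt.ne).comp t this
  have h3 := ((((hasDerivAt_id t).mul h1).add (h2.const_mul x)).div_const 2)
  refine h3.congr_deriv ?_
  have s : √(x - t ^ 2) = √x * √(1 - (t / √x) ^ 2) := by
    rw [← sqrt_mul hx.le]; congr 1; rw [div_pow, sq_sqrt hx.le]; field_simp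
  have p : 0 < √(1 - (t / √x) ^ 2) := by
    apply sqrt_pos.2
    have : 0 ≤ t / √x := by positivity
    nlinarith
  have q : √(x - t ^ 2) ^ 2 = x - t ^ 2 := sq_sqrt (by linarith)
  have e : x * (1 / √(1 - (t / √x) ^ 2) * (1 / √x)) = x / √(x - t ^ 2) := by
    rw [s]; field_simp
  rw [e]
  have p' : 0 < √(x - t ^ 2) := by rw [s]; positivity
  simp only [id]
  field_simp
  nlinarith

lemma mono_aux (G g : ℝ → ℝ) (a b : ℝ) (hab : a ≤ b) (hG : ∀ t, a ≤ t → t ≤ b → HasDerivAt G (g t) t)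
    (hg : ∀ t, a ≤ t → t ≤ b → 0 ≤ g t) : G a ≤ G b := by
  have : MonotoneOn G (Set.Icc a b) := by
    apply monotoneOn_of_deriv_nonneg (convex_Icc a b)
    · intro t ht; exact (hG t ht.1 ht.2).continuousAt.continuousWithinAt
    · intro t ht
      rw [interior_Icc] at ht
      exact (hG t ht.1.le ht.2.le).differentiableAt.differentiableWithinAt
    · intro t ht
      rw [interior_Icc] at ht
      rw [(hG t ht.1.le ht.2.le).deriv]
      exact hg t ht.1.le ht.2.le
  exact this ⟨le_rfl, hab⟩ ⟨hab, le_rfl⟩ hab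

lemma quad_deriv (x a c e t : ℝ) (hx : 0 < x) (h0 : 0 ≤ t) (ht : t ^ 2 < x) :
    HasDerivAt (fun t => FE x t - (c * (t - a) + e * (t - a) ^ 2 / 2))
      (√(x - t ^ 2) - (c + e * (t - a))) t := by
  refine (FE_deriv x t hx h0 ht).sub ?_
  have h1 := ((hasDerivAt_id t).sub_const a)
  have h2 := (h1.const_mul c).add (((h1.pow 2).const_mul e).div_const 2)
  refine h2.congr_deriv ?_
  simp; ring

lemma trap_alg (A B n : ℝ) (hA : 0 < A) (hB : 0 ≤ B) (k : (A - B) * (A + B) = 2 * n + 1)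
    (hn : n ≤ A) (n0 : 0 ≤ n) (hAB : A - B ≤ 1) :
    A - n / A / 2 - (A + B) / 2 ≤ 1 / (A + B) := by
  have e : A - n / A / 2 - (A + B) / 2 = ((A - B) * A - n) / (2 * A) := by field_simp; ring
  rw [e, div_le_div_iff₀ (by positivity) (by positivity)]
  have e2 : ((A - B) * A - n) * (A + B) = n * (A - B) + A := by linear_combination A * k
  rw [e2]
  nlinarith [mul_nonneg n0 (sub_nonneg.2 hAB)]

lemma trap_step (x : ℝ) (M : ℕ) (hx : 1 ≤ x) (hM : 2 * (M : ℝ) ^ 2 ≤ x) (n : ℕ) (hn : n < M) :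
    |FE x (n + 1 : ℕ) - FE x n - (√(x - (n : ℕ) ^ 2) + √(x - (n + 1 : ℕ) ^ 2)) / 2| ≤ 1 / √x := by
  obtain ⟨a1, a2, a3, a4⟩ := circ_facts x M hx hM n hn
  have hn1 : (n + 1 : ℝ) ≤ M := by exact_mod_cast hn
  have n0 : (0 : ℝ) ≤ n := by positivity
  have h2 : (n + 1 : ℝ) ^ 2 ≤ (M : ℝ) ^ 2 := by gcongr
  have A2 : √(x - (n : ℕ) ^ 2) ^ 2 = x - (n : ℕ) ^ 2 := sq_sqrt (by nlinarith)
  have B2 : √(x - (n + 1 : ℕ) ^ 2) ^ 2 = x - (n + 1 : ℕ) ^ 2 := sq_sqrt (by push_cast; nlinarith)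
  have R2 : √x ^ 2 = x := sq_sqrt (by linarith)
  have R1 : 0 < √x := sqrt_pos.2 (by linarith)
  set A := √(x - (n : ℕ) ^ 2)
  set B := √(x - (n + 1 : ℕ) ^ 2)
  push_cast at *
  have hlt : ∀ t : ℝ, n ≤ t → t ≤ n + 1 → t ^ 2 < x := by
    intro t h1 h2; nlinarith
  have A0 : 0 < A := by linarith
  have L := mono_aux (fun t => FE x t - (A * (t - n) + (B - A) * (t - n) ^ 2 / 2)) _ n (n + 1)
    (by linarith) (fun t h1 h2 => quad_deriv x n A (B - A) t (by linarith) (by linarith) (hlt t h1 h2))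
    (by
      intro t h1 h2
      rw [sub_nonneg]
      apply le_sqrt_of_sq_le
      obtain ⟨s, rfl⟩ : ∃ s, t = n + s := ⟨t - n, by ring⟩
      have s0 : 0 ≤ s := by linarith
      have s1 : s ≤ 1 := by linarith
      have : (A + (B - A) * (n + s - n)) ^ 2 = (1 - s) * A ^ 2 + s * B ^ 2 - s * (1 - s) * (A - B) ^ 2 := by ring
      rw [this, A2, B2]
      have : 0 ≤ s * (1 - s) := mul_nonneg s0 (by linarith)
      have := mul_nonneg this (sq_nonneg (A - B))
      nlinarith)
  have U := mono_aux (fun t => -(FE x t - (A * (t - n) + (-(n / A)) * (t - n) ^ 2 / 2))) _ n (n + 1)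
    (by linarith) (fun t h1 h2 => (quad_deriv x n A (-(n / A)) t (by linarith) (by linarith) (hlt t h1 h2)).neg)
    (by
      intro t h1 h2
      rw [neg_sub, sub_nonneg]
      apply sqrt_le_iff.2
      have e : A + -(n / A) * (t - n) = (x - n * t) / A := by
        field_simp; rw [A2]; ring
      have hnt : n * t ≤ x := by nlinarith
      rw [e]
      refine ⟨by apply div_nonneg <;> linarith, ?_⟩
      rw [div_pow, le_div_iff₀ (by positivity), A2]
      nlinarith [mul_nonneg (by linarith : 0 ≤ x) (sq_nonneg (t - n))])
  simp only [sub_self, add_sub_cancel_left] at L U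
  have R3 : √x ≤ A + B := by nlinarith
  have hAB : A - B ≤ 1 := by
    have : A - B = (2 * n + 1) / (A + B) := by rw [← neg_inj, neg_sub, a1, neg_div]
    rw [this, div_le_one (by linarith)]; linarith
  have hk : (A - B) * (A + B) = 2 * n + 1 := by linear_combination A2 - B2
  have hU := trap_alg A B n A0 (by linarith) hk (by linarith) n0 hAB
  have hf : 1 / (A + B) ≤ 1 / √x := by gcongr
  have hp : 0 < 1 / √x := by positivity
  rw [abs_le]
  constructor
  · linarith
  · ring_nf at L U hU hf ⊢
    linarith

lemma trap_sum (x : ℝ) (M : ℕ) (hx : 1 ≤ x) (hM : 2 * (M : ℝ) ^ 2 ≤ x) :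
    |FE x M - (∑ n ∈ Finset.Ico 1 (M + 1), √(x - (n : ℕ) ^ 2) + (√x - √(x - (M : ℕ) ^ 2)) / 2)| ≤ 1 := by
  have F0 : FE x 0 = 0 := by unfold FE; simp
  have key : ∀ k, k ≤ M → |FE x k - (∑ n ∈ Finset.Ico 1 (k + 1), √(x - (n : ℕ) ^ 2) + (√x - √(x - (k : ℕ) ^ 2)) / 2)| ≤ k * (1 / √x) := by
    intro k
    induction k with
    | zero => intro _; simp [F0]
    | succ k ih =>
      intro hk
      have h1 := ih (by omega)
      have h2 := trap_step x M hx hM k (by omega)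
      rw [Finset.sum_Ico_succ_top (by omega)]
      rw [abs_le] at *
      push_cast at *
      constructor <;> linarith
  refine (key M le_rfl).trans ?_
  have hMR : (M : ℝ) ≤ √x := by apply le_sqrt_of_sq_le; nlinarith
  rw [mul_one_div, div_le_one (by positivity)]
  exact hMR

lemma FE_end (x : ℝ) (M : ℕ) (hx : 1 ≤ x) (h1 : (M : ℝ) ≤ √(x / 2)) (h2 : √(x / 2) < M + 1) :
    √(x / 2) * (√(x / 2) - M) ≤ x / 4 + π * x / 8 - FE x M ∧
    x / 4 + π * x / 8 - FE x M ≤ √(x / 2) * (√(x / 2) - M) + 1 ∧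
    (M : ℝ) ≤ √(x - (M : ℕ) ^ 2) ∧ √(x - (M : ℕ) ^ 2) ≤ M + 2 := by
  set m := √(x / 2) with hm
  have m2 : m ^ 2 = x / 2 := sq_sqrt (by linarith)
  have m0 : 0 < m := sqrt_pos.2 (by linarith)
  have M0 : (0 : ℝ) ≤ M := by positivity
  have hMx : 2 * (M : ℝ) ^ 2 ≤ x := by nlinarith
  have Fm : FE x m = x / 4 + π * x / 8 := by
    unfold FE
    have e1 : x - m ^ 2 = m ^ 2 := by linarith
    have e2 : m / √x = √2 / 2 := by
      rw [hm, sqrt_div (by linarith)]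
      have : 0 < √x := sqrt_pos.2 (by linarith)
      field_simp; rw [sq_sqrt (by norm_num)]
    rw [e1, sqrt_sq m0.le, e2, ← sin_pi_div_four, arcsin_sin (by linarith [pi_pos]) (by linarith [pi_pos])]
    nlinarith
  set A := √(x - (M : ℕ) ^ 2) with hA
  have A2 : A ^ 2 = x - (M : ℕ) ^ 2 := sq_sqrt (by nlinarith)
  have Am : m ≤ A := by apply le_sqrt_of_sq_le; nlinarith
  have hAm : A - m ≤ 1 := by nlinarith
  have hlt : ∀ t : ℝ, t ≤ m → 0 ≤ t → t ^ 2 < x := by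
    intro t h1 h2; nlinarith
  have L := mono_aux (fun t => FE x t - (m * (t - M) + 0 * (t - M) ^ 2 / 2)) _ M m h1
    (fun t h1 h2 => quad_deriv x M m 0 t (by linarith) (by linarith) (hlt t h2 (by linarith)))
    (by
      intro t h1 h2
      rw [sub_nonneg]
      apply le_sqrt_of_sq_le
      nlinarith)
  have U := mono_aux (fun t => -(FE x t - (A * (t - M) + 0 * (t - M) ^ 2 / 2))) _ M m h1
    (fun t h1 h2 => (quad_deriv x M A 0 t (by linarith) (by linarith) (hlt t h2 (by linarith))).neg)
    (by
      intro t h1 h2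
      rw [neg_sub, sub_nonneg]
      apply sqrt_le_iff.2
      constructor
      · nlinarith
      · nlinarith)
  simp only [sub_self] at L U
  rw [Fm] at L U
  refine ⟨by nlinarith, by nlinarith, by linarith, by linarith⟩

noncomputable def latQ (x : ℝ) : Finset (ℕ × ℕ) := 
  open Classical in
  (Finset.Icc 1 ⌊√x⌋₊ ×ˢ Finset.range (⌊√x⌋₊ + 1)).filter
    (fun p => (p.1 : ℝ) ^ 2 + (p.2 : ℝ) ^ 2 ≤ x)

lemma mem_latQ (x : ℝ) (p : ℕ × ℕ) : p ∈ latQ x ↔ 1 ≤ p.1 ∧ (p.1 : ℝ) ^ 2 + (p.2 : ℝ) ^ 2 ≤ x := by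
  unfold latQ
  classical
  simp only [Finset.mem_filter, Finset.mem_product, Finset.mem_Icc, Finset.mem_range, Nat.lt_succ_iff]
  constructor
  · rintro ⟨⟨⟨h1, h2⟩, h3⟩, h4⟩; exact ⟨h1, h4⟩
  · rintro ⟨h1, h4⟩
    refine ⟨⟨⟨h1, ?_⟩, ?_⟩, h4⟩
    · apply Nat.le_floor; apply le_sqrt_of_sq_le; nlinarith [sq_nonneg (p.2 : ℝ)]
    · apply Nat.le_floor; apply le_sqrt_of_sq_le; nlinarith [sq_nonneg (p.1 : ℝ)]

lemma card_latQ (x : ℝ) (hx : 1 ≤ x) (M : ℕ) (h1 : (M : ℝ) ≤ √(x / 2)) (h2 : √(x / 2) < M + 1) :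
    (latQ x).card + M ^ 2 = 2 * ∑ a ∈ Finset.Ico 1 (M + 1), ⌊√(x - (a : ℕ) ^ 2)⌋₊ + ⌊√x⌋₊ := by
  classical
  set m := √(x / 2) with hm
  have m2 : m ^ 2 = x / 2 := sq_sqrt (by linarith)
  have m0 : 0 < m := sqrt_pos.2 (by linarith)
  have M0 : (0 : ℝ) ≤ M := by positivity
  have hMx : 2 * (M : ℝ) ^ 2 ≤ x := by nlinarith
  -- b = 0
  have c0 : ((latQ x).filter (fun p => p.2 = 0)).card = ⌊√x⌋₊ := by
    have : (latQ x).filter (fun p => p.2 = 0) = (Finset.Icc 1 ⌊√x⌋₊).image (fun a => (a, 0)) := by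
      ext ⟨a, b⟩
      simp only [Finset.mem_filter, mem_latQ, Finset.mem_image, Finset.mem_Icc, Prod.mk.injEq]
      constructor
      · rintro ⟨⟨h1, h2⟩, rfl⟩
        refine ⟨a, ⟨h1, ?_⟩, rfl, rfl⟩
        apply Nat.le_floor; apply le_sqrt_of_sq_le; simpa using h2
      · rintro ⟨a, ⟨h1, h2⟩, rfl, rfl⟩
        refine ⟨⟨h1, ?_⟩, rfl⟩
        have := (Nat.le_floor_iff (sqrt_nonneg x)).1 h2
        have := (le_sqrt' (by exact_mod_cast h1)).1 this
        simpa using this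
    rw [this, Finset.card_image_of_injective _ (fun a b h => by simpa using h)]
    simp
  set L := (latQ x).filter (fun p => ¬ p.2 = 0) with hL
  have hLm : ∀ p, p ∈ L ↔ 1 ≤ p.1 ∧ 1 ≤ p.2 ∧ (p.1 : ℝ) ^ 2 + (p.2 : ℝ) ^ 2 ≤ x := by
    intro p
    rw [hL, Finset.mem_filter, mem_latQ]
    constructor
    · rintro ⟨⟨h1, h2⟩, h3⟩; exact ⟨h1, by omega, h2⟩
    · rintro ⟨h1, h2, h3⟩; exact ⟨⟨h1, h3⟩, by omega⟩
  have hle : ∀ a : ℕ, a ≤ M → (a : ℝ) ^ 2 ≤ M ^ 2 := by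
    intro a ha
    have : (a : ℝ) ≤ M := by exact_mod_cast ha
    gcongr
  have c1 : (L.filter (fun p => p.1 ≤ M)).card = ∑ a ∈ Finset.Ico 1 (M + 1), ⌊√(x - (a : ℕ) ^ 2)⌋₊ := by
    have : L.filter (fun p => p.1 ≤ M) = ((Finset.Ico 1 (M + 1)).sigma (fun a => Finset.Icc 1 ⌊√(x - (a : ℕ) ^ 2)⌋₊)).image (fun s => (s.1, s.2)) := by
      ext ⟨a, b⟩
      simp only [Finset.mem_filter, hLm, Finset.mem_image, Finset.mem_sigma, Finset.mem_Icc, Finset.mem_Ico, Prod.mk.injEq, Sigma.exists]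
      constructor
      · rintro ⟨⟨h1, h2, h3⟩, h4⟩
        refine ⟨a, b, ⟨⟨h1, by omega⟩, h2, ?_⟩, rfl, rfl⟩
        apply Nat.le_floor; apply le_sqrt_of_sq_le; linarith
      · rintro ⟨a, b, ⟨⟨h1, h2⟩, h3, h4⟩, rfl, rfl⟩
        refine ⟨⟨h1, h3, ?_⟩, by omega⟩
        have := (Nat.le_floor_iff (sqrt_nonneg _)).1 h4
        have k := hle a (by omega)
        have := (le_sqrt' (by exact_mod_cast h3)).1 this
        linarith
    rw [this, Finset.card_image_of_injective, Finset.card_sigma]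
    · simp
    · rintro ⟨a, b⟩ ⟨c, d⟩ h
      simp only [Prod.mk.injEq] at h
      obtain ⟨rfl, rfl⟩ := h
      rfl
  have c2 : (L.filter (fun p => p.2 ≤ M)).card = (L.filter (fun p => p.1 ≤ M)).card := by
    apply Finset.card_bij (fun p _ => p.swap)
    · intro p hp
      rw [Finset.mem_filter, hLm] at *
      simp only [Prod.fst_swap, Prod.snd_swap]
      exact ⟨⟨hp.1.2.1, hp.1.1, by linarith [hp.1.2.2]⟩, hp.2⟩
    · intro p _ q _ h; exact Prod.swap_injective h
    · intro p hp
      refine ⟨p.swap, ?_, Prod.swap_swap p⟩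
      rw [Finset.mem_filter, hLm] at *
      simp only [Prod.fst_swap, Prod.snd_swap]
      exact ⟨⟨hp.1.2.1, hp.1.1, by linarith [hp.1.2.2]⟩, hp.2⟩
  have cu : L.filter (fun p => p.1 ≤ M) ∪ L.filter (fun p => p.2 ≤ M) = L := by
    rw [← Finset.filter_or]
    apply Finset.filter_true_of_mem
    intro p hp
    rw [hLm] at hp
    by_contra! hc
    have k1 : (M + 1 : ℝ) ≤ p.1 := by exact_mod_cast hc.1
    have k2 : (M + 1 : ℝ) ≤ p.2 := by exact_mod_cast hc.2
    nlinarith [hp.2.2]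
  have ci : (L.filter (fun p => p.1 ≤ M) ∩ L.filter (fun p => p.2 ≤ M)).card = M ^ 2 := by
    have : L.filter (fun p => p.1 ≤ M) ∩ L.filter (fun p => p.2 ≤ M) = Finset.Icc 1 M ×ˢ Finset.Icc 1 M := by
      ext p
      simp only [Finset.mem_inter, Finset.mem_filter, hLm, Finset.mem_product, Finset.mem_Icc]
      constructor
      · rintro ⟨⟨⟨h1, h2, h3⟩, h4⟩, h5, h6⟩; exact ⟨⟨h1, h4⟩, h2, h6⟩
      · rintro ⟨⟨h1, h4⟩, h2, h6⟩
        have := hle _ h4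
        have := hle _ h6
        exact ⟨⟨⟨h1, h2, by linarith⟩, h4⟩, ⟨h1, h2, by linarith⟩, h6⟩
    rw [this, Finset.card_product]; simp [sq]
  have cc := Finset.card_union_add_card_inter (L.filter (fun p => p.1 ≤ M)) (L.filter (fun p => p.2 ≤ M))
  rw [cu, ci, c2, c1] at cc
  have tot := Finset.card_filter_add_card_filter_not (s := latQ x) (fun p => p.2 = 0)
  rw [c0] at tot
  have : (Finset.filter (fun p => ¬ p.2 = 0) (latQ x)).card = L.card := rfl
  omega

lemma latQ_asymp (x : ℝ) (hx : 1 ≤ x) : |((latQ x).card : ℝ) - π * x / 4| ≤ 90 * x ^ ((1 : ℝ) / 3) := by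
  set M := ⌊√(x / 2)⌋₊ with hMdef
  have h1 : (M : ℝ) ≤ √(x / 2) := Nat.floor_le (sqrt_nonneg _)
  have h2 : √(x / 2) < M + 1 := Nat.lt_floor_add_one _
  have m2 : √(x / 2) ^ 2 = x / 2 := sq_sqrt (by linarith)
  have M0 : (0 : ℝ) ≤ M := by positivity
  have hMx : 2 * (M : ℝ) ^ 2 ≤ x := by nlinarith
  have hc := card_latQ x hx M h1 h2
  have hc' : ((latQ x).card : ℝ) + (M : ℝ) ^ 2 = 2 * ∑ a ∈ Finset.Ico 1 (M + 1), (⌊√(x - (a : ℕ) ^ 2)⌋₊ : ℝ) + (⌊√x⌋₊ : ℝ) := by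
    exact_mod_cast hc
  have hfl : ∀ y : ℝ, 0 ≤ y → (⌊y⌋₊ : ℝ) = y - 1 / 2 - psiE y := by
    intro y hy
    unfold psiE
    have := Int.fract_add_floor y
    have e := natCast_floor_eq_intCast_floor (R := ℝ) hy
    rw [e]; linarith
  have hs : ∑ a ∈ Finset.Ico 1 (M + 1), (⌊√(x - (a : ℕ) ^ 2)⌋₊ : ℝ) =
     ∑ a ∈ Finset.Ico 1 (M + 1), √(x - (a : ℕ) ^ 2) - M / 2 - ∑ a ∈ Finset.Ico 1 (M + 1), psiE (√(x - (a : ℕ) ^ 2)) := by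
    rw [Finset.sum_congr rfl (fun a _ => hfl _ (sqrt_nonneg _)), Finset.sum_sub_distrib, Finset.sum_sub_distrib]
    simp; ring
  have hps := abs_le.1 (psi_sum x M hx hMx)
  have htr := abs_le.1 (trap_sum x M hx hMx)
  obtain ⟨e1, e2, e3, e4⟩ := FE_end x M hx h1 h2
  have f1 : (⌊√x⌋₊ : ℝ) ≤ √x := Nat.floor_le (sqrt_nonneg _)
  have f2 : √x < ⌊√x⌋₊ + 1 := Nat.lt_floor_add_one _
  have hx3 : 1 ≤ x ^ ((1 : ℝ) / 3) := one_le_rpow hx (by norm_num)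
  rw [hs] at hc'
  have hMsq : (M : ℝ) ^ 2 = x / 2 - 2 * (√(x / 2) * (√(x / 2) - M)) + (√(x / 2) - M) ^ 2 := by nlinarith
  have th0 : 0 ≤ (√(x / 2) - M) ^ 2 := sq_nonneg _
  have th1 : (√(x / 2) - M) ^ 2 ≤ 1 := by nlinarith
  rw [abs_le]
  constructor <;> linarith


noncomputable def gBasis : Module.Basis (Fin 2) ℤ GaussianInt :=
  Module.Basis.ofEquivFun
    { toFun := fun z => ![z.re, z.im]
      invFun := fun v => ⟨v 0, v 1⟩
      left_inv := fun z => by ext <;> simp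
      right_inv := fun v => by ext i; fin_cases i <;> simp
      map_add' := fun z w => by ext i; fin_cases i <;> simp
      map_smul' := fun c z => by ext i; fin_cases i <;> simp }

instance gFree : Module.Free ℤ GaussianInt := Module.Free.of_basis gBasis
instance gFinite : Module.Finite ℤ GaussianInt := Module.Finite.of_basis gBasis

lemma g_norm (z : GaussianInt) : Algebra.norm ℤ z = z.norm := by
  rw [Algebra.norm_eq_matrix_det gBasis, Matrix.det_fin_two]
  simp only [Algebra.leftMulMatrix_eq_repr_mul]
  have r : ∀ w : GaussianInt, ∀ i, gBasis.repr w i = ![w.re, w.im] i := by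
    intro w i; rfl
  have b0 : gBasis 0 = ⟨1, 0⟩ := by
    rw [gBasis, Module.Basis.coe_ofEquivFun]; ext <;> simp
  have b1 : gBasis 1 = ⟨0, 1⟩ := by
    rw [gBasis, Module.Basis.coe_ofEquivFun]; ext <;> simp
  rw [r, r, r, r, b0, b1]
  simp [Zsqrtd.norm]

lemma normI_eq (I : Ideal GaussianInt) : normI I = Ideal.absNorm I := by
  rw [Ideal.absNorm_apply, Submodule.cardQuot_apply]; rfl

lemma normI_mul (I J : Ideal GaussianInt) : normI (I * J) = normI I * normI J := by
  rw [normI_eq, normI_eq, normI_eq, map_mul]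

lemma normI_eq_zero (I : Ideal GaussianInt) : normI I = 0 ↔ I = ⊥ := by
  rw [normI_eq, Ideal.absNorm_eq_zero_iff]

lemma normI_pos (I : Ideal GaussianInt) (h : I ≠ ⊥) : (1 : ℝ) ≤ normI I := by
  have := mt (normI_eq_zero I).1 h
  exact_mod_cast Nat.one_le_iff_ne_zero.2 this

lemma normI_span (a b : ℤ) : (normI (Ideal.span {(⟨a, b⟩ : GaussianInt)}) : ℝ) = (a : ℝ) ^ 2 + (b : ℝ) ^ 2 := by
  rw [normI_eq, Ideal.absNorm_span_singleton, g_norm]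
  have : (Zsqrtd.norm (⟨a, b⟩ : GaussianInt)) = a ^ 2 + b ^ 2 := by simp [Zsqrtd.norm]; ring
  rw [this, Nat.cast_natAbs, abs_of_nonneg (by positivity)]
  push_cast; ring

noncomputable def gI (p : ℕ × ℕ) : Ideal GaussianInt := Ideal.span {(⟨p.1, p.2⟩ : GaussianInt)}

lemma normI_gI (p : ℕ × ℕ) : (normI (gI p) : ℝ) = (p.1 : ℝ) ^ 2 + (p.2 : ℝ) ^ 2 := by
  rw [gI, normI_span]; simp

lemma gI_inj (p q : ℕ × ℕ) (hp : 1 ≤ p.1) (hq : 1 ≤ q.1) (h : gI p = gI q) : p = q := by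
  rw [gI, gI, Ideal.span_singleton_eq_span_singleton] at h
  obtain ⟨u, hu⟩ := h
  have hn : (u : GaussianInt).norm = 1 := (Zsqrtd.norm_eq_one_iff' (by norm_num) _).2 u.isUnit
  generalize (u : GaussianInt) = v at *
  obtain ⟨c, d⟩ := v
  obtain ⟨a, b⟩ := p
  obtain ⟨a', b'⟩ := q
  have hn' : c * c + d * d = 1 := by simpa [Zsqrtd.norm] using hn
  rw [Zsqrtd.ext_iff] at hu
  simp at hu
  obtain ⟨h1, h2⟩ := hu
  simp only at hp hq
  have hc : c = -1 ∨ c = 0 ∨ c = 1 := by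
    have : c ≤ 1 := by nlinarith
    have : -1 ≤ c := by nlinarith
    omega
  have hd : d = -1 ∨ d = 0 ∨ d = 1 := by
    have : d ≤ 1 := by nlinarith
    have : -1 ≤ d := by nlinarith
    omega
  rw [Prod.mk.injEq]
  rcases hc with rfl | rfl | rfl <;> rcases hd with rfl | rfl | rfl <;> simp at hn' h1 h2 <;> omega

lemma gI_surj (I : Ideal GaussianInt) (h : I ≠ ⊥) : ∃ p : ℕ × ℕ, 1 ≤ p.1 ∧ gI p = I := by
  obtain ⟨z, rfl⟩ := (IsPrincipalIdealRing.principal I).principal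
  obtain ⟨p, q⟩ := z
  have hz : ¬ (p = 0 ∧ q = 0) := by
    rintro ⟨rfl, rfl⟩
    apply h
    change Ideal.span {(0 : GaussianInt)} = ⊥
    simp
  have key : ∀ (a b c d : ℤ), c * c + d * d = 1 → 1 ≤ a → 0 ≤ b → a * c - b * d = p → a * d + b * c = q →
      ∃ r : ℕ × ℕ, 1 ≤ r.1 ∧ gI r = Submodule.span GaussianInt {(⟨p, q⟩ : GaussianInt)} := by
    intro a b c d hu ha hb h1 h2
    refine ⟨(a.toNat, b.toNat), by simp only; omega, ?_⟩
    change Ideal.span _ = Ideal.span _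
    rw [Ideal.span_singleton_eq_span_singleton]
    have hn : IsUnit (⟨c, d⟩ : GaussianInt) :=
      (Zsqrtd.norm_eq_one_iff' (by norm_num) _).1 (by simp [Zsqrtd.norm]; linarith)
    refine ⟨hn.unit, ?_⟩
    rw [IsUnit.unit_spec, Zsqrtd.ext_iff]
    simp [Int.toNat_of_nonneg hb, Int.toNat_of_nonneg (by omega : 0 ≤ a)]
    constructor <;> linarith
  by_cases h1 : 0 < p ∧ 0 ≤ q
  · exact key p q 1 0 (by norm_num) (by omega) (by omega) (by ring) (by ring)
  by_cases h2 : p ≤ 0 ∧ 0 < q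
  · exact key q (-p) 0 1 (by norm_num) (by omega) (by omega) (by ring) (by ring)
  by_cases h3 : p < 0 ∧ q ≤ 0
  · exact key (-p) (-q) (-1) 0 (by norm_num) (by omega) (by omega) (by ring) (by ring)
  · exact key (-q) p 0 (-1) (by norm_num) (by omega) (by omega) (by ring) (by ring)

noncomputable def IF (x : ℝ) : Finset (Ideal GaussianInt) :=
  open Classical in (latQ x).image gI

lemma mem_IF (x : ℝ) (I : Ideal GaussianInt) : I ∈ IF x ↔ I ≠ ⊥ ∧ (normI I : ℝ) ≤ x := by
  classical
  rw [IF, Finset.mem_image]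
  constructor
  · rintro ⟨p, hp, rfl⟩
    rw [mem_latQ] at hp
    refine ⟨?_, by rw [normI_gI]; exact hp.2⟩
    intro h
    have h0 := (normI_eq_zero _).2 h
    have := normI_gI p
    rw [h0] at this
    have h1 : (1 : ℝ) ≤ p.1 := by exact_mod_cast hp.1
    push_cast at this
    nlinarith [sq_nonneg (p.2 : ℝ)]
  · rintro ⟨h1, h2⟩
    obtain ⟨p, hp, rfl⟩ := gI_surj I h1
    exact ⟨p, (mem_latQ x p).2 ⟨hp, by rw [← normI_gI]; exact h2⟩, rfl⟩

lemma card_IF (x : ℝ) : (IF x).card = (latQ x).card := by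
  classical
  rw [IF, Finset.card_image_of_injOn]
  intro p hp q hq h
  exact gI_inj p q ((mem_latQ x p).1 hp).1 ((mem_latQ x q).1 hq).1 h

lemma IF_asymp (x : ℝ) (hx : 1 ≤ x) : |((IF x).card : ℝ) - π * x / 4| ≤ 90 * x ^ ((1 : ℝ) / 3) := by
  rw [card_IF]; exact latQ_asymp x hx

lemma IF_sq (x : ℝ) (hx : 1 ≤ x) : |((IF x).card : ℝ) ^ 2 - π ^ 2 / 16 * x ^ 2| ≤ 8280 * x ^ ((4 : ℝ) / 3) := by
  have h := IF_asymp x hx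
  have x0 : 0 < x := by linarith
  have e : x ^ ((4 : ℝ) / 3) = x ^ ((1 : ℝ) / 3) * x := by
    rw [← rpow_add_one x0.ne']; norm_num
  have h13 : x ^ ((1 : ℝ) / 3) ≤ x := by
    have := rpow_le_rpow_of_exponent_le hx (by norm_num : (1 : ℝ) / 3 ≤ 1)
    rwa [rpow_one] at this
  have p0 : 0 ≤ x ^ ((1 : ℝ) / 3) := by positivity
  have hp := pi_lt_four
  have hp0 := pi_pos
  have h' := abs_le.1 h
  set A := ((IF x).card : ℝ)
  have A0 : 0 ≤ A := by positivity
  have pix : π * x ≤ 4 * x := by nlinarith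
  have pix0 : 0 ≤ π * x := by positivity
  have hs : |A + π * x / 4| ≤ 92 * x := by
    rw [abs_of_nonneg (by linarith)]; linarith
  rw [show A ^ 2 - π ^ 2 / 16 * x ^ 2 = (A - π * x / 4) * (A + π * x / 4) by ring, abs_mul, e]
  calc _ ≤ (90 * x ^ ((1 : ℝ) / 3)) * (92 * x) := by gcongr
    _ = _ := by ring

lemma w_summable : Summable (fun I : Ideal GaussianInt => (normI I : ℝ) ^ (-(4 : ℝ) / 3)) := by
  have hs := EisensteinSeries.summable_one_div_norm_rpow (k := 8 / 3) (by norm_num)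
  have ex : ∀ I : {I : Ideal GaussianInt // I ≠ ⊥}, ∃ p : ℕ × ℕ, 1 ≤ p.1 ∧ gI p = I.1 :=
    fun I => gI_surj I.1 I.2
  choose f hf1 hf2 using ex
  have inj : Function.Injective (fun I => (![((f I).1 : ℤ), ((f I).2 : ℤ)] : Fin 2 → ℤ)) := by
    intro I J h
    have h0 := congrFun h 0
    have h1 := congrFun h 1
    simp at h0 h1
    have : f I = f J := Prod.ext h0 h1
    apply Subtype.ext
    rw [← hf2, ← hf2, this]
  have hs' := hs.comp_injective inj
  have hsub : Summable (fun I : {I : Ideal GaussianInt // I ≠ ⊥} => (normI I.1 : ℝ) ^ (-(4 : ℝ) / 3)) := by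
    refine Summable.of_nonneg_of_le (fun I => by positivity) (fun I => ?_) hs'
    simp only [Function.comp]
    set v : Fin 2 → ℤ := ![((f I).1 : ℤ), ((f I).2 : ℤ)] with hv
    have hN : (normI I.1 : ℝ) = ((f I).1 : ℝ) ^ 2 + ((f I).2 : ℝ) ^ 2 := by
      rw [← normI_gI, hf2]
    have hvN : ‖v‖ ≤ √(normI I.1 : ℝ) := by
      rw [pi_norm_le_iff_of_nonneg (sqrt_nonneg _)]
      intro i
      rw [hN]
      fin_cases i
      · simp [hv, Int.norm_eq_abs]; apply le_sqrt_of_sq_le; nlinarith [sq_nonneg ((f I).2 : ℝ)]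
      · simp [hv, Int.norm_eq_abs]; apply le_sqrt_of_sq_le; nlinarith [sq_nonneg ((f I).1 : ℝ)]
    have hv0 : 0 < ‖v‖ := by
      rw [norm_pos_iff]
      intro h
      have h0 := congrFun h 0
      simp [hv] at h0
      have := hf1 I
      omega
    have e : (normI I.1 : ℝ) ^ (-(4 : ℝ) / 3) = (√(normI I.1 : ℝ)) ^ (-(8 / 3 : ℝ)) := by
      rw [sqrt_eq_rpow, ← rpow_mul (by positivity)]; norm_num
    rw [e]
    exact rpow_le_rpow_of_nonpos hv0 hvN (by norm_num)
  have := (summable_subtype_iff_indicator (f := fun I : Ideal GaussianInt => (normI I : ℝ) ^ (-(4 : ℝ) / 3)) (s := {I | I ≠ ⊥})).1 hsub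
  convert this using 1
  ext I
  by_cases h : I = ⊥
  · have h0 := (normI_eq_zero I).2 h
    rw [Set.indicator_of_notMem (by simpa using h), h0]
    simp
  · rw [Set.indicator_of_mem (by simpa using h)]


noncomputable def gmu (D : Ideal GaussianInt) : ℝ := (UniqueFactorizationMonoid.moebius D : ℝ)

open UniqueFactorizationMonoid in
lemma gmu_abs (D : Ideal GaussianInt) : |gmu D| ≤ 1 := by
  rw [gmu]
  by_cases h : Squarefree D
  · rw [h.moebius_eq]; push_cast; rw [abs_pow]; simp
  · rw [moebius_of_not_squarefree h]; simp

open UniqueFactorizationMonoid in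
lemma gmu_nf (D : Ideal GaussianInt) (h : Squarefree D) :
    gmu D = (-1) ^ (normalizedFactors D).toFinset.card := by
  have h0 : D ≠ 0 := h.ne_zero
  rw [gmu, h.moebius_eq]
  have h1 : (normalizedFactors D).Nodup := (squarefree_iff_nodup_normalizedFactors h0).1 h
  rw [Multiset.toFinset_card_of_nodup h1]
  push_cast
  rw [normalizedFactors, Multiset.card_map]

open UniqueFactorizationMonoid in
lemma gmu_sum (I : Ideal GaussianInt) (hI : I ≠ ⊥) (s : Finset (Ideal GaussianInt))
    (hs : ∀ D, D ∣ I → D ∈ s) :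
    (open Classical in ∑ D ∈ s, if D ∣ I then gmu D else 0) = if I = ⊤ then 1 else 0 := by
  classical
  have hI0 : I ≠ 0 := hI
  set T := (normalizedFactors I).toFinset with hT
  have hTp : ∀ S ⊆ T, ∀ q ∈ S.val, Prime q := by
    intro S hS q hq
    have := hS hq
    rw [hT, Multiset.mem_toFinset] at this
    exact prime_of_normalized_factor q this
  have hnf : ∀ S ⊆ T, normalizedFactors S.val.prod = S.val :=
    fun S hS => normalizedFactors_prod_of_prime (hTp S hS)
  have hne : ∀ S ⊆ T, S.val.prod ≠ 0 := by
    intro S hS h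
    rw [Multiset.prod_eq_zero_iff] at h
    exact (hTp S hS 0 h).ne_zero rfl
  have h1 : (∑ D ∈ s, if D ∣ I then gmu D else 0) = ∑ S ∈ T.powerset, ((-1 : ℝ)) ^ S.card := by
    rw [← Finset.sum_filter]
    symm
    have : ∑ D ∈ s with D ∣ I, gmu D = ∑ D ∈ (s.filter (· ∣ I)).filter Squarefree, gmu D := by
      symm
      apply Finset.sum_filter_of_ne
      intro D hD h
      by_contra h'
      exact h (by rw [gmu, moebius_of_not_squarefree h']; simp)
    rw [this]
    refine Finset.sum_bij' (fun S _ => S.val.prod) (fun D _ => (normalizedFactors D).toFinset) ?_ ?_ ?_ ?_ ?_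
    · intro S hS
      rw [Finset.mem_powerset] at hS
      have hd : S.val.prod ∣ I := by
        rw [dvd_iff_normalizedFactors_le_normalizedFactors (hne S hS) hI0, hnf S hS,
          Multiset.le_iff_subset S.nodup]
        intro q hq
        have := hS hq
        rwa [hT, Multiset.mem_toFinset] at this
      rw [Finset.mem_filter, Finset.mem_filter]
      refine ⟨⟨hs _ hd, hd⟩, ?_⟩
      rw [squarefree_iff_nodup_normalizedFactors (hne S hS), hnf S hS]
      exact S.nodup
    · intro D hD
      rw [Finset.mem_filter, Finset.mem_filter] at hD
      rw [Finset.mem_powerset]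
      intro q hq
      rw [Multiset.mem_toFinset] at hq
      rw [hT, Multiset.mem_toFinset]
      exact Multiset.mem_of_le ((dvd_iff_normalizedFactors_le_normalizedFactors hD.2.ne_zero hI0).1 hD.1.2) hq
    · intro S hS
      rw [Finset.mem_powerset] at hS
      simp only [hnf S hS]
      exact Finset.val_toFinset S
    · intro D hD
      rw [Finset.mem_filter, Finset.mem_filter] at hD
      have h1 := (squarefree_iff_nodup_normalizedFactors hD.2.ne_zero).1 hD.2
      simp only [Multiset.toFinset_val, h1.dedup]
      exact Ideal.prod_normalizedFactors_eq_self hD.2.ne_zero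
    · intro S hS
      rw [Finset.mem_powerset] at hS
      rw [gmu_nf _ ((squarefree_iff_nodup_normalizedFactors (hne S hS)).2 (by rw [hnf S hS]; exact S.nodup)),
        hnf S hS, Finset.val_toFinset]
  have h2 := congrArg (Int.cast : ℤ → ℝ) (Finset.sum_powerset_neg_one_pow_card (x := T))
  rw [h1]
  push_cast at h2
  rw [h2]
  have : T = ∅ ↔ I = ⊤ := by
    rw [hT, Multiset.toFinset_eq_empty, ← Ideal.one_eq_top]
    constructor
    · intro h
      rw [← Ideal.prod_normalizedFactors_eq_self hI, h]; simp
    · rintro rfl; exact normalizedFactors_one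
  simp [this]

lemma IF_dvd (x : ℝ) (D : Ideal GaussianInt) (hD : D ≠ ⊥) :
    (open Classical in (IF x).filter (D ∣ ·)).card = (IF (x / normI D)).card := by
  classical
  have hN := normI_pos D hD
  symm
  apply Finset.card_bij (fun J _ => D * J)
  · intro J hJ
    rw [mem_IF] at hJ
    rw [Finset.mem_filter, mem_IF]
    refine ⟨⟨mul_ne_zero hD hJ.1, ?_⟩, dvd_mul_right _ _⟩
    rw [normI_mul]; push_cast
    have := hJ.2
    rw [le_div_iff₀ (by linarith)] at this
    linarith
  · intro J hJ J' hJ' h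
    exact mul_left_cancel₀ (show D ≠ 0 from hD) h
  · intro K hK
    rw [Finset.mem_filter, mem_IF] at hK
    obtain ⟨⟨h1, h2⟩, J, rfl⟩ := hK
    refine ⟨J, ?_, rfl⟩
    rw [mem_IF]
    refine ⟨right_ne_zero_of_mul h1, ?_⟩
    rw [normI_mul] at h2; push_cast at h2
    rw [le_div_iff₀ (by linarith)]; linarith

lemma normI_le_of_dvd (D I : Ideal GaussianInt) (hI : I ≠ ⊥) (h : D ∣ I) : D ∈ IF (normI I) := by
  obtain ⟨J, rfl⟩ := h
  rw [mem_IF]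
  refine ⟨left_ne_zero_of_mul hI, ?_⟩
  have h1 := normI_pos J (right_ne_zero_of_mul hI)
  have h2 := normI_pos D (left_ne_zero_of_mul hI)
  rw [normI_mul]; push_cast; nlinarith

lemma count_eq (x : ℝ) :
    (({p ∈ P x | p.1 ⊔ p.2 = ⊤}.ncard : ℕ) : ℝ) = ∑ D ∈ IF x, gmu D * ((IF (x / normI D)).card : ℝ) ^ 2 := by
  classical
  have hset : {p ∈ P x | p.1 ⊔ p.2 = ⊤} = (((IF x ×ˢ IF x).filter (fun p => p.1 ⊔ p.2 = ⊤) : Finset _) : Set _) := by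
    ext p
    simp only [P, Set.mem_ofPred_eq, Finset.coe_filter, Finset.mem_product, mem_IF]
    tauto
  rw [hset, Set.ncard_coe_finset, Finset.card_filter]
  push_cast
  have h1 : ∀ p ∈ IF x ×ˢ IF x, (if p.1 ⊔ p.2 = ⊤ then (1 : ℝ) else 0) =
      ∑ D ∈ IF x, gmu D * ((if D ∣ p.1 then 1 else 0) * (if D ∣ p.2 then 1 else 0)) := by
    intro p hp
    rw [Finset.mem_product, mem_IF, mem_IF] at hp
    have hne : p.1 ⊔ p.2 ≠ ⊥ := fun h => hp.1.1 (le_bot_iff.1 (h ▸ le_sup_left))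
    rw [← gmu_sum (p.1 ⊔ p.2) hne (IF x)]
    · apply Finset.sum_congr rfl
      intro D _
      rw [Ideal.dvd_iff_le, Ideal.dvd_iff_le, Ideal.dvd_iff_le, sup_le_iff]
      by_cases a : p.1 ≤ D <;> by_cases b : p.2 ≤ D <;> simp [a, b]
    · intro D hD
      have hd : D ∣ p.1 := Ideal.dvd_iff_le.2 (le_sup_left.trans (Ideal.dvd_iff_le.1 hD))
      have := (mem_IF _ _).1 (normI_le_of_dvd D p.1 hp.1.1 hd)
      exact (mem_IF _ _).2 ⟨this.1, this.2.trans hp.1.2⟩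
  rw [Finset.sum_congr rfl h1, Finset.sum_comm]
  apply Finset.sum_congr rfl
  intro D hD
  rw [mem_IF] at hD
  rw [← Finset.mul_sum, ← IF_dvd x D hD.1, Finset.card_filter, Finset.sum_product, sq]
  push_cast
  rw [Finset.sum_mul_sum]


lemma inv_sq_le (I : Ideal GaussianInt) : 1 / (normI I : ℝ) ^ 2 ≤ (normI I : ℝ) ^ (-(4 : ℝ) / 3) := by
  by_cases h : I = ⊥
  · rw [(normI_eq_zero I).2 h]; simp
  · have h1 := normI_pos I h
    have e : 1 / (normI I : ℝ) ^ 2 = (normI I : ℝ) ^ (-2 : ℝ) := by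
      rw [rpow_neg (by positivity), one_div]; norm_num
    rw [e]
    exact rpow_le_rpow_of_exponent_le h1 (by norm_num)

lemma sq_summable : Summable (fun I : Ideal GaussianInt => 1 / (normI I : ℝ) ^ 2) :=
  Summable.of_nonneg_of_le (fun I => by positivity) inv_sq_le w_summable

lemma gmu_term_le (D : Ideal GaussianInt) : ‖gmu D / (normI D : ℝ) ^ 2‖ ≤ 1 / (normI D : ℝ) ^ 2 := by
  rw [norm_div, Real.norm_eq_abs, Real.norm_eq_abs, abs_of_nonneg (a := (normI D : ℝ) ^ 2) (by positivity)]
  gcongr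
  exact gmu_abs D

lemma gmu_summable_norm : Summable (fun I : Ideal GaussianInt => ‖gmu I / (normI I : ℝ) ^ 2‖) :=
  Summable.of_nonneg_of_le (fun I => norm_nonneg _) gmu_term_le sq_summable

lemma zeta_eq : zetaQi2 = ∑' I : Ideal GaussianInt, 1 / (normI I : ℝ) ^ 2 := by
  rw [zetaQi2]
  apply tsum_subtype_eq_of_support_subset (f := fun I : Ideal GaussianInt => 1 / (normI I : ℝ) ^ 2) (s := {I | I ≠ ⊥})
  intro I hI h
  apply hI
  simp [(normI_eq_zero I).2 h]

lemma zeta_mul : zetaQi2 * ∑' D : Ideal GaussianInt, gmu D / (normI D : ℝ) ^ 2 = 1 := by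
  classical
  rw [zeta_eq, mul_comm]
  let N0 := {D : Ideal GaussianInt // D ≠ ⊥}
  have hsub : ∑' D : Ideal GaussianInt, gmu D / (normI D : ℝ) ^ 2 = ∑' D : N0, gmu D.1 / (normI D.1 : ℝ) ^ 2 := by
    symm
    apply tsum_subtype_eq_of_support_subset (f := fun D : Ideal GaussianInt => gmu D / (normI D : ℝ) ^ 2) (s := {I | I ≠ ⊥})
    intro I hI h
    apply hI
    simp [(normI_eq_zero I).2 h]
  have s1 : Summable (fun D : N0 => ‖gmu D.1 / (normI D.1 : ℝ) ^ 2‖) :=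
    gmu_summable_norm.comp_injective Subtype.val_injective
  have s2 : Summable (fun I : Ideal GaussianInt => ‖1 / (normI I : ℝ) ^ 2‖) := sq_summable.norm
  rw [hsub, tsum_mul_tsum_of_summable_norm s1 s2]
  have sp := (summable_mul_of_summable_norm s1 s2)
  let f : N0 × Ideal GaussianInt → ℝ := fun q => if q.1.1 ∣ q.2 then gmu q.1.1 / (normI q.2 : ℝ) ^ 2 else 0
  let g : N0 × Ideal GaussianInt → N0 × Ideal GaussianInt := fun q => (q.1, q.1.1 * q.2)
  have gi : Function.Injective g := by
    rintro ⟨D, J⟩ ⟨D', J'⟩ h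
    simp only [g, Prod.mk.injEq] at h
    obtain ⟨rfl, h2⟩ := h
    rw [mul_left_cancel₀ (show D.1 ≠ 0 from D.2) h2]
  have fg : ∀ q, f (g q) = gmu q.1.1 / (normI q.1.1 : ℝ) ^ 2 * (1 / (normI q.2 : ℝ) ^ 2) := by
    intro q
    simp only [f, g, dvd_mul_right, if_true]
    rw [normI_mul]; push_cast
    rw [div_mul_div_comm, mul_one, mul_pow]
  have fsupp : ∀ q, q ∉ Set.range g → f q = 0 := by
    rintro ⟨D, K⟩ h
    simp only [f]
    rw [if_neg]
    rintro ⟨J, hJ⟩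
    exact h ⟨(D, J), by simp only [g]; rw [← hJ]⟩
  have fs : Summable f := by
    rw [← gi.summable_iff fsupp]
    exact sp.congr fun q => (fg q).symm
  have e1 : ∑' q : N0 × Ideal GaussianInt, gmu q.1.1 / (normI q.1.1 : ℝ) ^ 2 * (1 / (normI q.2 : ℝ) ^ 2) = ∑' q, f q := by
    rw [← gi.tsum_eq (f := f) (by
      intro q hq; by_contra h; exact hq (fsupp q h))]
    exact tsum_congr fun q => (fg q).symm
  rw [e1]
  have fs' : Summable (fun q : Ideal GaussianInt × N0 => f q.swap) := fs.prod_symm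
  have e2 : ∑' q, f q = ∑' q : Ideal GaussianInt × N0, f q.swap :=
    ((Equiv.prodComm (Ideal GaussianInt) N0).tsum_eq f).symm
  rw [e2, fs'.tsum_prod]
  have inner : ∀ K : Ideal GaussianInt, ∑' D : N0, f (Prod.swap (K, D)) = if K = ⊤ then 1 else 0 := by
    intro K
    simp only [f, Prod.swap]
    by_cases hK : K = ⊥
    · rw [if_neg (by rw [hK]; exact bot_ne_top), (normI_eq_zero K).2 hK]
      simp
    have h1 : ∑' D : N0, (if D.1 ∣ K then gmu D.1 / (normI K : ℝ) ^ 2 else 0) =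
        ∑' D : Ideal GaussianInt, (if D ∣ K then gmu D / (normI K : ℝ) ^ 2 else 0) := by
      apply tsum_subtype_eq_of_support_subset (f := fun D : Ideal GaussianInt => (if D ∣ K then gmu D / (normI K : ℝ) ^ 2 else 0)) (s := {I | I ≠ ⊥})
      intro I hI h
      apply hI
      simp only
      rw [if_neg]
      intro hd
      rw [h] at hd
      exact hK (zero_dvd_iff.1 hd)
    rw [h1, tsum_eq_sum (s := IF (normI K)) (by
      intro D hD
      rw [if_neg]
      intro hd
      exact hD (normI_le_of_dvd D K hK hd))]
    have h2 := gmu_sum K hK (IF (normI K)) (fun D hd => normI_le_of_dvd D K hK hd)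
    have h3 : ∑ D ∈ IF (normI K), (if D ∣ K then gmu D / (normI K : ℝ) ^ 2 else 0) =
        (∑ D ∈ IF (normI K), if D ∣ K then gmu D else 0) / (normI K : ℝ) ^ 2 := by
      rw [Finset.sum_div]
      apply Finset.sum_congr rfl
      intro D _
      split_ifs <;> simp
    rw [h3]
    rw [h2]
    split_ifs with h
    · rw [h, normI_eq, Ideal.absNorm_top]; simp
    · simp
  rw [tsum_congr inner, tsum_ite_eq]

lemma final_bound (x : ℝ) (hx : 1 ≤ x) :
    |({p ∈ P x | p.1 ⊔ p.2 = ⊤}.ncard : ℝ) - π ^ 2 * x ^ 2 / (16 * zetaQi2)|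
      ≤ (8280 * (∑' I : Ideal GaussianInt, (normI I : ℝ) ^ (-(4 : ℝ) / 3)) +
        π ^ 2 / 16 * (∑' I : Ideal GaussianInt, (normI I : ℝ) ^ (-(4 : ℝ) / 3))) * x ^ ((4 : ℝ) / 3) := by
  classical
  set W := ∑' I : Ideal GaussianInt, (normI I : ℝ) ^ (-(4 : ℝ) / 3) with hW
  have x0 : 0 < x := by linarith
  have wn : ∀ I : Ideal GaussianInt, 0 ≤ (normI I : ℝ) ^ (-(4 : ℝ) / 3) := fun I => by positivity
  set M := ∑' D : Ideal GaussianInt, gmu D / (normI D : ℝ) ^ 2 with hM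
  have hz := zeta_mul
  rw [← hM] at hz
  have z0 : zetaQi2 ≠ 0 := left_ne_zero_of_mul_eq_one hz
  have e0 : π ^ 2 * x ^ 2 / (16 * zetaQi2) = π ^ 2 / 16 * x ^ 2 * M := by
    rw [div_eq_iff (by positivity)]
    linear_combination (-π ^ 2 * x ^ 2) * hz
  rw [e0, count_eq]
  set S := ∑ D ∈ IF x, gmu D / (normI D : ℝ) ^ 2 with hS
  have b1 : |∑ D ∈ IF x, gmu D * ((IF (x / normI D)).card : ℝ) ^ 2 - π ^ 2 / 16 * x ^ 2 * S| ≤ 8280 * W * x ^ ((4 : ℝ) / 3) := by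
    rw [hS, Finset.mul_sum, ← Finset.sum_sub_distrib]
    calc _ ≤ ∑ D ∈ IF x, 8280 * x ^ ((4 : ℝ) / 3) * (normI D : ℝ) ^ (-(4 : ℝ) / 3) := by
          refine (Finset.abs_sum_le_sum_abs _ _).trans (Finset.sum_le_sum fun D hD => ?_)
          rw [mem_IF] at hD
          have hN := normI_pos D hD.1
          have hN0 : (0 : ℝ) < normI D := by linarith
          have := IF_sq (x / normI D) (by rw [le_div_iff₀ hN0]; linarith [hD.2])
          rw [div_rpow x0.le hN0.le] at this
          rw [show gmu D * ((IF (x / normI D)).card : ℝ) ^ 2 - π ^ 2 / 16 * x ^ 2 * (gmu D / (normI D : ℝ) ^ 2)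
            = gmu D * (((IF (x / normI D)).card : ℝ) ^ 2 - π ^ 2 / 16 * (x / normI D) ^ 2) by
              field_simp, abs_mul]
          rw [show (-(4 : ℝ) / 3) = -((4 : ℝ) / 3) by ring, rpow_neg hN0.le, mul_assoc, ← div_eq_mul_inv]
          calc _ ≤ 1 * _ := mul_le_mul (gmu_abs D) this (abs_nonneg _) (by norm_num)
            _ = _ := one_mul _
      _ = 8280 * x ^ ((4 : ℝ) / 3) * ∑ D ∈ IF x, (normI D : ℝ) ^ (-(4 : ℝ) / 3) := by rw [Finset.mul_sum]
      _ ≤ 8280 * x ^ ((4 : ℝ) / 3) * W := by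
          gcongr
          exact w_summable.sum_le_tsum _ (fun I _ => wn I)
      _ = _ := by ring
  have b2 : |S - M| ≤ x ^ (-(2 : ℝ) / 3) * W := by
    have hs : Summable (fun D : Ideal GaussianInt => gmu D / (normI D : ℝ) ^ 2) := gmu_summable_norm.of_norm
    have h1 := hs.sum_add_tsum_compl (s := IF x)
    have h2 : S - M = - ∑' D : ((IF x : Set (Ideal GaussianInt))ᶜ : Set _), gmu D.1 / (normI D.1 : ℝ) ^ 2 := by
      rw [hS, hM, ← h1]; ring
    rw [h2, abs_neg]
    have hws : Summable (fun D : ((IF x : Set (Ideal GaussianInt))ᶜ : Set _) => x ^ (-(2 : ℝ) / 3) * (normI D.1 : ℝ) ^ (-(4 : ℝ) / 3)) :=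
      (w_summable.subtype _).mul_left _
    have h3 := tsum_of_norm_bounded (f := fun D : ((IF x : Set (Ideal GaussianInt))ᶜ : Set _) => gmu D.1 / (normI D.1 : ℝ) ^ 2) hws.hasSum (by
      rintro ⟨D, hD⟩
      simp only
      by_cases hb : D = ⊥
      · rw [(normI_eq_zero D).2 hb]; simp
      have hN := normI_pos D hb
      have hN0 : (0 : ℝ) < normI D := by linarith
      have hlt : x ≤ normI D := by
        by_contra h
        exact hD (Finset.mem_coe.2 ((mem_IF x D).2 ⟨hb, (not_le.1 h).le⟩))
      refine (gmu_term_le D).trans ?_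
      have e : 1 / (normI D : ℝ) ^ 2 = (normI D : ℝ) ^ (-(2 : ℝ) / 3) * (normI D : ℝ) ^ (-(4 : ℝ) / 3) := by
        rw [← rpow_add hN0, one_div, ← rpow_natCast, ← rpow_neg hN0.le]; norm_num
      rw [e]
      gcongr ?_ * _
      exact rpow_le_rpow_of_nonpos x0 hlt (by norm_num))
    rw [Real.norm_eq_abs] at h3
    refine h3.trans ?_
    rw [tsum_mul_left]
    gcongr
    exact w_summable.tsum_subtype_le _ _ wn
  have e3 : x ^ 2 * x ^ (-(2 : ℝ) / 3) = x ^ ((4 : ℝ) / 3) := by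
    rw [← rpow_natCast, ← rpow_add x0]; norm_num
  calc _ = |(∑ D ∈ IF x, gmu D * ((IF (x / normI D)).card : ℝ) ^ 2 - π ^ 2 / 16 * x ^ 2 * S) + π ^ 2 / 16 * x ^ 2 * (S - M)| := by
        congr 1; ring
    _ ≤ _ + _ := abs_add_le _ _
    _ ≤ 8280 * W * x ^ ((4 : ℝ) / 3) + π ^ 2 / 16 * x ^ 2 * (x ^ (-(2 : ℝ) / 3) * W) := by
        rw [abs_mul, abs_of_nonneg (a := π ^ 2 / 16 * x ^ 2) (by positivity)]
        gcongr
    _ = _ := by rw [← e3]; ring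

theorem coprimePairCount_asymptotic :
    ∃ C : ℝ, 0 < C ∧ ∀ x : ℝ, 1 ≤ x →
      |({p ∈ P x | p.1 ⊔ p.2 = ⊤}.ncard : ℝ) - π ^ 2 * x ^ 2 / (16 * zetaQi2)|
        ≤ C * x ^ ((4 : ℝ) / 3) := by
  have wn : 0 ≤ ∑' I : Ideal GaussianInt, (normI I : ℝ) ^ (-(4 : ℝ) / 3) :=
    tsum_nonneg fun I => by positivity
  refine ⟨8280 * (∑' I : Ideal GaussianInt, (normI I : ℝ) ^ (-(4 : ℝ) / 3)) + π ^ 2 / 16 * (∑' I : Ideal GaussianInt, (normI I : ℝ) ^ (-(4 : ℝ) / 3)) + 1, ?_, fun x hx => (final_bound x hx).trans ?_⟩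
  · positivity
  · exact mul_le_mul_of_nonneg_right (by linarith) (by positivity)
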